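/- arXiv:2204.05824 — 7 statements merged into one kernel-verified Lean document; each statement's English description precedes it below -/
import Mathlib

section
/- For every real number α > 1, the set S_α = { j² − α²ℓ² : ℓ a nonnegative integer, j a positive zero of J_ℓ } is unbounded from above and unbounded from below. -/
open Real Filter Set

/-- The Bessel function of the first kind of order `ν`. -/
noncomputable def besselJ (ν x : ℝ) : ℝ :=
  ∑' m : ℕ, (-1 : ℝ) ^ m / (m.factorial * Real.Gamma (m + ν + 1)) * (x / 2) ^ (2 * (m : ℝ) + ν)

/-- `j` is a positive zero of the Bessel function `J_ν`. -/
def IsPosBesselZero (ν j : ℝ) : Prop := 0 < j ∧ besselJ ν j = 0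

/-!
In the variable `t = log x` Bessel's equation reads `u'' = -(e ^ (2t) - ν²) u` for
`u t = J_ν (e ^ t)`. Where `e ^ (2t) - ν² ≥ w²`, comparing `u` with a sine of frequency `w` forces a
zero of `u` in every interval of length `π / w`; hence `J_ν` has a zero in `[x, x e ^ (π / w)]` as
soon as `w² + ν² ≤ x²`. For `ν = 0` and `w = 1` this gives arbitrarily large zeros. For
`1 < b < β < |α|`, `x = b ℓ` and `w = ℓ √(b² - 1)` it gives, for large `ℓ`, a zero `j ≤ β ℓ` of
`J_ℓ`, so that `j² - α² ℓ² ≤ -(α² - β²) ℓ²`.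
-/

section ExpSeries

variable {ι : Type*} {a c : ι → ℝ}

/-- The series of exponentials (generalized Dirichlet series) `∑ aᵢ e ^ (cᵢ t)`; the value is `0`
where it does not converge absolutely. -/
noncomputable def expSeries (a c : ι → ℝ) (t : ℝ) : ℝ := ∑' i, a i * exp (c i * t)

lemma exp_mul_le_add_of_mem_Icc (r : ℝ) {x y t : ℝ} (ht : t ∈ Icc x y) :
    exp (r * t) ≤ exp (r * x) + exp (r * y) := by
  rcases le_total 0 r with hr | hr
  · exact (exp_le_exp.2 (mul_le_mul_of_nonneg_left ht.2 hr)).trans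
      (le_add_of_nonneg_left (exp_pos _).le)
  · exact (exp_le_exp.2 (mul_le_mul_of_nonpos_left ht.1 hr)).trans
      (le_add_of_nonneg_right (exp_pos _).le)

lemma abs_mul_exp_mul_le (r t : ℝ) :
    |r| * exp (r * t) ≤ exp (r * (t - 1)) + exp (r * (t + 1)) := by
  have habs : |r| ≤ exp (-r) + exp r := by linarith [add_one_le_exp |r|, exp_abs_le r]
  calc |r| * exp (r * t) ≤ (exp (-r) + exp r) * exp (r * t) := by gcongr
    _ = exp (r * (t - 1)) + exp (r * (t + 1)) := by
      rw [add_mul, ← exp_add, ← exp_add]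
      ring_nf

lemma summable_mul_mul_exp (h : ∀ t, Summable fun i ↦ a i * exp (c i * t)) (t : ℝ) :
    Summable fun i ↦ (a * c) i * exp (c i * t) := by
  refine ((h (t - 1)).norm.add (h (t + 1)).norm).of_norm_bounded fun i ↦ ?_
  simp only [Pi.mul_apply, norm_eq_abs, abs_mul, abs_exp, mul_assoc, ← mul_add]
  exact mul_le_mul_of_nonneg_left (abs_mul_exp_mul_le _ _) (abs_nonneg _)

lemma hasDerivAt_expSeries (h : ∀ t, Summable fun i ↦ a i * exp (c i * t)) (t : ℝ) :
    HasDerivAt (expSeries a c) (expSeries (a * c) c t) t := by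
  have hterm (i : ι) (s : ℝ) :
      HasDerivAt (fun s ↦ a i * exp (c i * s)) ((a * c) i * exp (c i * s)) s := by
    refine (((hasDerivAt_id s).const_mul (c i)).exp.const_mul (a i)).congr_deriv ?_
    simp only [id_eq, Pi.mul_apply]
    ring
  have hbound : Summable fun i ↦ ‖(a * c) i * exp (c i * (t - 1))‖ +
      ‖(a * c) i * exp (c i * (t + 1))‖ :=
    (summable_mul_mul_exp h (t - 1)).norm.add (summable_mul_mul_exp h (t + 1)).norm
  have ht : t ∈ Ioo (t - 1) (t + 1) := ⟨by linarith, by linarith⟩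
  refine hasDerivAt_tsum_of_isPreconnected hbound isOpen_Ioo isPreconnected_Ioo
    (fun i s _ ↦ hterm i s) (fun i s hs ↦ ?_) ht (h t) ht
  simp only [norm_mul, norm_eq_abs, abs_exp, ← mul_add]
  exact mul_le_mul_of_nonneg_left (exp_mul_le_add_of_mem_Icc _ (Ioo_subset_Icc_self hs))
    (by positivity)

end ExpSeries

section Sturm

variable {u u' v v' p q : ℝ → ℝ} {a b : ℝ}

lemma antitoneOn_wronskian (hu : ∀ t ∈ Icc a b, HasDerivAt u (u' t) t)
    (hu' : ∀ t ∈ Icc a b, HasDerivAt u' (-q t * u t) t)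
    (hv : ∀ t ∈ Icc a b, HasDerivAt v (v' t) t)
    (hv' : ∀ t ∈ Icc a b, HasDerivAt v' (-p t * v t) t)
    (hpq : ∀ t ∈ Icc a b, p t ≤ q t) (hu₀ : ∀ t ∈ Icc a b, 0 ≤ u t)
    (hv₀ : ∀ t ∈ Icc a b, 0 ≤ v t) :
    AntitoneOn (fun t ↦ u' t * v t - u t * v' t) (Icc a b) := by
  have hW : ∀ t ∈ Icc a b, HasDerivAt (fun t ↦ u' t * v t - u t * v' t)
      ((p t - q t) * (u t * v t)) t := fun t ht ↦
    (((hu' t ht).mul (hv t ht)).sub ((hu t ht).mul (hv' t ht))).congr_deriv (by ring)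
  refine antitoneOn_of_hasDerivWithinAt_nonpos (convex_Icc a b)
    (fun t ht ↦ (hW t ht).continuousAt.continuousWithinAt)
    (fun t ht ↦ (hW t (interior_subset ht)).hasDerivWithinAt) fun t ht ↦ ?_
  have ht := interior_subset ht
  exact mul_nonpos_of_nonpos_of_nonneg (sub_nonpos.2 (hpq t ht))
    (mul_nonneg (hu₀ t ht) (hv₀ t ht))

lemma forall_mem_Icc_pos_of_ne_zero (hab : a ≤ b) (hu : ContinuousOn u (Icc a b))
    (hne : ∀ t ∈ Icc a b, u t ≠ 0) (ha : 0 < u a) : ∀ t ∈ Icc a b, 0 < u t := by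
  intro t ht
  by_contra! hneg
  obtain ⟨s, hs, hs₀⟩ := isPreconnected_Icc.intermediate_value ht (left_mem_Icc.2 hab) hu
    ⟨hneg, ha.le⟩
  exact hne s hs hs₀

theorem sturm_comparison (hab : a ≤ b) (hu : ∀ t ∈ Icc a b, HasDerivAt u (u' t) t)
    (hu' : ∀ t ∈ Icc a b, HasDerivAt u' (-q t * u t) t)
    (hv : ∀ t ∈ Icc a b, HasDerivAt v (v' t) t)
    (hv' : ∀ t ∈ Icc a b, HasDerivAt v' (-p t * v t) t)
    (hpq : ∀ t ∈ Icc a b, p t ≤ q t) (hv₀ : ∀ t ∈ Icc a b, 0 ≤ v t)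
    (hva : v a = 0) (hvb : v b = 0) (hva' : 0 < v' a) (hvb' : v' b ≤ 0) :
    ∃ t ∈ Icc a b, u t = 0 := by
  by_contra! hne
  have ha : a ∈ Icc a b := left_mem_Icc.2 hab
  have hb : b ∈ Icc a b := right_mem_Icc.2 hab
  wlog hua : 0 < u a generalizing u u'
  · refine this (u := -u) (u' := -u') (fun t ht ↦ (hu t ht).neg)
      (fun t ht ↦ (hu' t ht).neg.congr_deriv (by simp)) (fun t ht ↦ neg_ne_zero.2 (hne t ht)) ?_
    exact neg_pos.2 ((not_lt.1 hua).lt_of_ne (hne a ha))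
  have hpos : ∀ t ∈ Icc a b, 0 < u t := forall_mem_Icc_pos_of_ne_zero hab
    (fun t ht ↦ (hu t ht).continuousAt.continuousWithinAt) hne hua
  have hW := antitoneOn_wronskian hu hu' hv hv' hpq (fun t ht ↦ (hpos t ht).le) hv₀ ha hb hab
  simp only [hva, hvb, mul_zero, zero_sub, neg_le_neg_iff] at hW
  have hWa : 0 < u a * v' a := mul_pos hua hva'
  have hWb : u b * v' b ≤ 0 := mul_nonpos_of_nonneg_of_nonpos (hpos b hb).le hvb'
  linarith

lemma exists_eq_zero_of_sq_le {w : ℝ} (hw : 0 < w)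
    (hu : ∀ t ∈ Icc a (a + π / w), HasDerivAt u (u' t) t)
    (hu' : ∀ t ∈ Icc a (a + π / w), HasDerivAt u' (-q t * u t) t)
    (hq : ∀ t ∈ Icc a (a + π / w), w ^ 2 ≤ q t) : ∃ t ∈ Icc a (a + π / w), u t = 0 := by
  have hphase (t : ℝ) : HasDerivAt (fun t ↦ w * (t - a)) w t := by
    simpa using ((hasDerivAt_id t).sub_const a).const_mul w
  have hend : w * (a + π / w - a) = π := by field_simp; ring
  refine sturm_comparison (v := fun t ↦ sin (w * (t - a))) (v' := fun t ↦ cos (w * (t - a)) * w)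
    (p := fun _ ↦ w ^ 2) (le_add_of_nonneg_right (by positivity)) hu hu'
    (fun t _ ↦ (hphase t).sin)
    (fun t _ ↦ ((hphase t).cos.mul_const w).congr_deriv (by ring)) hq (fun t ht ↦ ?_)
    (by simp) (by simp only [hend, sin_pi]) (by simpa using hw)
    (by simpa only [hend, cos_pi, neg_one_mul, neg_nonpos] using hw.le)
  refine sin_nonneg_of_nonneg_of_le_pi (mul_nonneg hw.le (sub_nonneg.2 ht.1)) ?_
  rw [← hend]
  exact mul_le_mul_of_nonneg_left (sub_le_sub_right ht.2 a) hw.le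

end Sturm

section Bessel

/-- The exponent `2m + ν` of `x` in the `m`-th term of the series of `J_ν`. -/
def besselExponent (ν : ℝ) (m : ℕ) : ℝ := 2 * m + ν

/-- The coefficient of `x ^ (2m + ν)` in the series of `J_ν`. -/
noncomputable def besselCoeff (ν : ℝ) (m : ℕ) : ℝ :=
  (-1) ^ m / (m.factorial * Gamma (m + ν + 1)) / 2 ^ besselExponent ν m

lemma besselJ_exp (ν t : ℝ) :
    besselJ ν (exp t) = expSeries (besselCoeff ν) (besselExponent ν) t := by
  refine tsum_congr fun m ↦ ?_
  rw [div_rpow (exp_pos t).le zero_le_two, ← exp_mul, mul_comm t, besselCoeff, besselExponent]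
  ring

/-- At the poles of `Γ` the conventions `Γ (-n) = 0` and `0⁻¹ = 0` give `1 / Γ` its correct value
`0`. -/
lemma inv_Gamma_eq_mul_inv_Gamma_add_one (s : ℝ) : (Gamma s)⁻¹ = s * (Gamma (s + 1))⁻¹ := by
  rcases eq_or_ne s 0 with rfl | hs
  · simp
  · rw [Gamma_add_one hs, mul_inv, mul_inv_cancel_left₀ hs]

lemma besselCoeff_succ (ν : ℝ) (m : ℕ) :
    (besselExponent ν (m + 1) ^ 2 - ν ^ 2) * besselCoeff ν (m + 1) = -besselCoeff ν m := by
  have hexp : besselExponent ν (m + 1) = besselExponent ν m + 2 := by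
    simp only [besselExponent]
    push_cast
    ring
  have hGamma := inv_Gamma_eq_mul_inv_Gamma_add_one (m + ν + 1)
  have hshift : ((m + 1 : ℕ) : ℝ) + ν + 1 = m + ν + 1 + 1 := by
    push_cast
    ring
  have hpow : (2 : ℝ) ^ besselExponent ν (m + 1) = 2 ^ besselExponent ν m * 4 := by
    rw [hexp, rpow_add two_pos]
    norm_num
  simp only [besselCoeff, hpow, hshift, div_eq_mul_inv, mul_inv, hGamma, Nat.factorial_succ]
  simp only [besselExponent]
  push_cast
  field_simp
  ring

lemma besselExponent_sq_sub_mul_term_succ (ν t : ℝ) (m : ℕ) :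
    (besselExponent ν (m + 1) ^ 2 - ν ^ 2) *
        (besselCoeff ν (m + 1) * exp (besselExponent ν (m + 1) * t)) =
      -exp t ^ 2 * (besselCoeff ν m * exp (besselExponent ν m * t)) := by
  have hexp : exp (besselExponent ν (m + 1) * t) = exp t ^ 2 * exp (besselExponent ν m * t) := by
    rw [← exp_nat_mul, ← exp_add]
    simp only [besselExponent]
    push_cast
    ring_nf
  rw [hexp, ← mul_assoc, besselCoeff_succ]
  ring

lemma tendsto_besselExponent_atTop (ν : ℝ) : Tendsto (besselExponent ν) atTop atTop :=
  tendsto_atTop_add_const_right _ _ (tendsto_natCast_atTop_atTop.const_mul_atTop two_pos)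

lemma summable_besselCoeff_mul_exp (ν t : ℝ) :
    Summable fun m ↦ besselCoeff ν m * exp (besselExponent ν m * t) := by
  have hlim : Tendsto (fun m ↦ besselExponent ν (m + 1) ^ 2 - ν ^ 2) atTop atTop :=
    tendsto_atTop_add_const_right _ _ <| (tendsto_pow_atTop two_ne_zero).comp <|
      (tendsto_besselExponent_atTop ν).comp (tendsto_add_atTop_nat 1)
  refine summable_of_ratio_norm_eventually_le one_half_lt_one ?_
  filter_upwards [hlim.eventually_ge_atTop (2 * exp t ^ 2)] with m hm
  have hsq : 0 < exp t ^ 2 := by positivity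
  have hrec := congrArg norm (besselExponent_sq_sub_mul_term_succ ν t m)
  rw [norm_mul (_ - _), norm_mul (-_), norm_neg, norm_of_nonneg hsq.le,
    norm_of_nonneg ((mul_pos two_pos hsq).le.trans hm)] at hrec
  refine le_of_mul_le_mul_left ?_ (mul_pos two_pos hsq)
  calc 2 * exp t ^ 2 * ‖besselCoeff ν (m + 1) * exp (besselExponent ν (m + 1) * t)‖
      ≤ exp t ^ 2 * ‖besselCoeff ν m * exp (besselExponent ν m * t)‖ := by
        rw [← hrec]
        gcongr
    _ = 2 * exp t ^ 2 * (1 / 2 * ‖besselCoeff ν m * exp (besselExponent ν m * t)‖) := by ring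

theorem bessel_equation (ν t : ℝ) :
    expSeries (besselCoeff ν * besselExponent ν * besselExponent ν) (besselExponent ν) t =
      -(exp t ^ 2 - ν ^ 2) * expSeries (besselCoeff ν) (besselExponent ν) t := by
  have hsum₀ := summable_besselCoeff_mul_exp ν
  have hsum₂ := summable_mul_mul_exp (summable_mul_mul_exp hsum₀) t
  have hterm (m : ℕ) :
      (besselCoeff ν * besselExponent ν * besselExponent ν) m * exp (besselExponent ν m * t) -
          ν ^ 2 * (besselCoeff ν m * exp (besselExponent ν m * t)) =
        (besselExponent ν m ^ 2 - ν ^ 2) * (besselCoeff ν m * exp (besselExponent ν m * t)) := by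
    simp only [Pi.mul_apply]
    ring
  have hsum := (hsum₂.sub ((hsum₀ t).mul_left (ν ^ 2))).congr hterm
  have hzero : besselExponent ν 0 ^ 2 - ν ^ 2 = 0 := by simp [besselExponent]
  have hshift :
      expSeries (besselCoeff ν * besselExponent ν * besselExponent ν) (besselExponent ν) t -
          ν ^ 2 * expSeries (besselCoeff ν) (besselExponent ν) t =
        -exp t ^ 2 * expSeries (besselCoeff ν) (besselExponent ν) t := by
    simp only [expSeries]
    rw [← tsum_mul_left, ← hsum₂.tsum_sub ((hsum₀ t).mul_left _), tsum_congr hterm,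
      hsum.tsum_eq_zero_add, hzero, zero_mul, zero_add,
      tsum_congr (besselExponent_sq_sub_mul_term_succ ν t), tsum_mul_left]
  linarith

theorem exists_isPosBesselZero_mem_Icc {ν x w : ℝ} (hx : 0 < x) (hw : 0 < w)
    (h : w ^ 2 + ν ^ 2 ≤ x ^ 2) : ∃ j ∈ Icc x (x * exp (π / w)), IsPosBesselZero ν j := by
  have hsum := summable_besselCoeff_mul_exp ν
  obtain ⟨t, ht, hzero⟩ := exists_eq_zero_of_sq_le (a := log x) (q := fun t ↦ exp t ^ 2 - ν ^ 2) hw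
    (fun t _ ↦ hasDerivAt_expSeries hsum t)
    (fun t _ ↦ (hasDerivAt_expSeries (summable_mul_mul_exp hsum) t).congr_deriv
      (bessel_equation ν t))
    fun t ht ↦ by
      have hxt : x ≤ exp t := (log_le_iff_le_exp hx).1 ht.1
      have hsq : x ^ 2 ≤ exp t ^ 2 := by gcongr
      linarith
  refine ⟨exp t, ⟨(log_le_iff_le_exp hx).1 ht.1, ?_⟩, exp_pos t, (besselJ_exp ν t).trans hzero⟩
  calc exp t ≤ exp (log x + π / w) := exp_le_exp.2 ht.2
    _ = x * exp (π / w) := by rw [exp_add, exp_log hx]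

lemma exists_isPosBesselZero_ge (ν x : ℝ) : ∃ j ≥ x, IsPosBesselZero ν j := by
  obtain ⟨j, hj, hzero⟩ := exists_isPosBesselZero_mem_Icc (ν := ν) (x := |x| + |ν| + 1) (w := 1)
    (by positivity) one_pos
    (by nlinarith [sq_abs ν, abs_nonneg ν, abs_nonneg x, mul_nonneg (abs_nonneg x) (abs_nonneg ν)])
  exact ⟨j, by linarith [hj.1, le_abs_self x, abs_nonneg ν], hzero⟩

lemma eventually_exists_isPosBesselZero_le_mul {β : ℝ} (hβ : 1 < β) :
    ∀ᶠ ν : ℝ in atTop, ∃ j ≤ β * ν, IsPosBesselZero ν j := by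
  obtain ⟨b, hb₁, hbβ⟩ := exists_between hβ
  have hgap : 0 < b ^ 2 - 1 := by nlinarith
  have hlim : Tendsto (fun ν ↦ b * exp (π / (√(b ^ 2 - 1) * ν))) atTop (nhds b) := by
    have hw : Tendsto (fun ν ↦ π / (√(b ^ 2 - 1) * ν)) atTop (nhds 0) :=
      (tendsto_id.const_mul_atTop (sqrt_pos.2 hgap)).const_div_atTop π
    simpa using ((continuous_exp.tendsto 0).comp hw).const_mul b
  filter_upwards [hlim.eventually_lt_const hbβ, eventually_gt_atTop 0] with ν hlt hν
  obtain ⟨j, hj, hzero⟩ := exists_isPosBesselZero_mem_Icc (ν := ν) (x := b * ν)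
    (w := √(b ^ 2 - 1) * ν) (by positivity) (by positivity)
    (by rw [mul_pow, sq_sqrt hgap.le]; linarith)
  refine ⟨j, ?_, hzero⟩
  calc j ≤ b * ν * exp (π / (√(b ^ 2 - 1) * ν)) := hj.2
    _ = b * exp (π / (√(b ^ 2 - 1) * ν)) * ν := by ring
    _ ≤ β * ν := by gcongr

end Bessel

/-- The set `S_α` of the Dirichlet eigenvalues of `-Δ + α² ∂_θ²` on the unit disk. -/
def mixedDirichletSpectrum (α : ℝ) : Set ℝ :=
  {x : ℝ | ∃ (ℓ : ℕ) (j : ℝ), IsPosBesselZero ℓ j ∧ x = j ^ 2 - α ^ 2 * ℓ ^ 2}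

lemma not_bddAbove_mixedDirichletSpectrum (α : ℝ) : ¬ BddAbove (mixedDirichletSpectrum α) := by
  refine not_bddAbove_iff.2 fun B ↦ ?_
  obtain ⟨j, hj, hzero⟩ := exists_isPosBesselZero_ge (0 : ℕ) (|B| + 1)
  refine ⟨_, ⟨0, j, hzero, rfl⟩, ?_⟩
  simp only [Nat.cast_zero]
  nlinarith [le_abs_self B, abs_nonneg B]

lemma not_bddBelow_mixedDirichletSpectrum {α : ℝ} (hα : 1 < |α|) :
    ¬ BddBelow (mixedDirichletSpectrum α) := by
  refine not_bddBelow_iff.2 fun B ↦ ?_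
  obtain ⟨β, hβ₁, hβα⟩ := exists_between hα
  have hgap : β ^ 2 - α ^ 2 < 0 := by
    rw [sub_neg, sq_lt_sq, abs_of_pos (one_pos.trans hβ₁)]
    exact hβα
  have hlim : Tendsto (fun ℓ : ℕ ↦ (β ^ 2 - α ^ 2) * (ℓ : ℝ) ^ 2) atTop atBot :=
    ((tendsto_pow_atTop two_ne_zero).comp tendsto_natCast_atTop_atTop).const_mul_atTop_of_neg hgap
  obtain ⟨ℓ, ⟨j, hj, hzero⟩, hℓ⟩ := ((tendsto_natCast_atTop_atTop.eventually
    (eventually_exists_isPosBesselZero_le_mul hβ₁)).and (hlim.eventually_lt_atBot B)).exists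
  refine ⟨_, ⟨ℓ, j, hzero, rfl⟩, ?_⟩
  calc j ^ 2 - α ^ 2 * ℓ ^ 2 ≤ (β * ℓ) ^ 2 - α ^ 2 * ℓ ^ 2 := by
        have := hzero.1
        gcongr
    _ = (β ^ 2 - α ^ 2) * ℓ ^ 2 := by ring
    _ < B := hℓ

theorem stmt_0_general (α : ℝ) :
    ¬ BddAbove (mixedDirichletSpectrum α) ∧ (1 < |α| → ¬ BddBelow (mixedDirichletSpectrum α)) :=
  ⟨not_bddAbove_mixedDirichletSpectrum α, not_bddBelow_mixedDirichletSpectrum⟩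

theorem stmt_0 (α : ℝ) (hα : 1 < α) :
    ¬ BddAbove {x : ℝ | ∃ (ℓ : ℕ) (j : ℝ), IsPosBesselZero ℓ j ∧ x = j ^ 2 - α ^ 2 * ℓ ^ 2} ∧
    ¬ BddBelow {x : ℝ | ∃ (ℓ : ℕ) (j : ℝ), IsPosBesselZero ℓ j ∧ x = j ^ 2 - α ^ 2 * ℓ ^ 2} :=
  (stmt_0_general α).imp_right fun h ↦ h (hα.trans_le (le_abs_self α))
end

section
/- There exists a sequence (α_n) in (1, ∞) with α_n → ∞ such that for every n the following hold: (i) for every real Λ, the set of pairs (ℓ, j), with ℓ a nonnegative integer and j a positive zero of J_ℓ, satisfying j² − α_n²ℓ² = Λ is finite; (ii) there exists c_n > 0 such that for every nonnegative integer ℓ and every positive zero j of J_ℓ, either j² − α_n²ℓ² = 0 or |j² − α_n²ℓ²| ≥ c_n · j; (iii) the set { j² − α_n²ℓ² : ℓ a nonnegative integer, j a positive zero of J_ℓ } has no finite accumulation point in ℝ. -/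
open Real Filter Set

/-!
Take `α = sec β` with `0 < β < π / 2` and `tan β - β ∈ π ℕ`. The phase `ℓ θ - x sin θ` of Bessel's
integral for `π J_ℓ(x)` is stationary, for `x = α ℓ`, at `θ = β`, where its value
`-ℓ (tan β - β)` is an integer multiple of `π`. Hence for `x` within `1/100` of `α ℓ` and `ℓ` large
the integral is `±` a positive number: near `β` the integrand is close to `±1`, and away from `β`
two integrations by parts leave small boundary terms and a remainder of that same sign, because the
phase satisfies `3 φ''² ≥ φ' φ'''`. So the zeros `j` of `J_ℓ` satisfy `|j - α ℓ| ≥ 1/100` for all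
large `ℓ`, and then `|j² - α² ℓ²| = |j - α ℓ| (j + α ℓ) ≥ j / 100`. Each of the remaining `J_ℓ` has
finitely many zeros in every bounded interval, being a power of `x` times a nonzero entire function
of `x²`.
-/

section IntegrationByParts

/-- The boundary term of `∫ cos φ`, at a point where the phase has `φ = y`, `φ' = y'`, `φ'' = y''`,
after integrating by parts twice, writing `cos φ` as `φ'⁻¹ (sin φ)'` and then `sin φ` as
`φ'⁻¹ (1 - cos φ)'`. -/
noncomputable def cosBoundary (y y' y'' : ℝ) : ℝ :=
  sin y / y' + (1 - cos y) * y'' / y' ^ 3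

lemma cosBoundary_neg_deriv (y y' y'' : ℝ) :
    cosBoundary y (-y') y'' = -cosBoundary y y' y'' := by
  simp only [cosBoundary, Odd.neg_pow (by decide : Odd 3), div_neg]
  ring

lemma cosBoundary_of_sin_eq_zero {y y'' : ℝ} (y' : ℝ) (hy : sin y = 0) (hy'' : y'' = 0) :
    cosBoundary y y' y'' = 0 := by
  simp [cosBoundary, hy, hy'']

lemma cosBoundary_le {y y' y'' Y D S : ℝ} (hy : |y| ≤ Y) (hD : 0 < D) (hy' : D ≤ y')
    (hS : 0 ≤ S) (hy'' : y'' ≤ S) :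
    cosBoundary y y' y'' ≤ Y / D + Y ^ 2 * S / (2 * D ^ 3) := by
  have hY : 0 ≤ Y := (abs_nonneg y).trans hy
  have hsin : sin y ≤ Y := (le_abs_self _).trans (abs_sin_le_abs.trans hy)
  have hcos : 1 - cos y ≤ Y ^ 2 / 2 := by
    have : y ^ 2 ≤ Y ^ 2 := sq_le_sq' (abs_le.1 hy).1 (abs_le.1 hy).2
    linarith [one_sub_sq_div_two_le_cos (x := y)]
  have hnum : (1 - cos y) * y'' ≤ Y ^ 2 / 2 * S :=
    mul_le_mul_of_nonneg (by linarith) hy'' (by linarith [cos_le_one y]) hS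
  have hy'0 : 0 < y' := hD.trans_le hy'
  calc cosBoundary y y' y''
      ≤ Y / y' + Y ^ 2 / 2 * S / y' ^ 3 := by unfold cosBoundary; gcongr
    _ ≤ Y / D + Y ^ 2 / 2 * S / D ^ 3 := by gcongr
    _ = Y / D + Y ^ 2 * S / (2 * D ^ 3) := by ring

-- The constants here and in `integral_cos_pos_of_quadratic_phase` leave 10% of room around the
-- model `φ = t² / (4η²)`, for which `φ = 1/4`, `η φ' = ± 1/2` and `η² φ'' = 1/2` at `t = ± η`.
lemma cosBoundary_le_width {y y' y'' η : ℝ} (hη : 0 < η) (hy : |y| ≤ 11 / 40)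
    (hy' : 9 / 20 ≤ η * y') (hy'' : η ^ 2 * y'' ≤ 11 / 20) :
    cosBoundary y y' y'' ≤ 17 / 20 * η := by
  refine (cosBoundary_le hy (D := 9 / 20 / η) (S := 11 / 20 / η ^ 2) (by positivity)
    ((div_le_iff₀' hη).2 hy') (by positivity) ((le_div_iff₀' (by positivity)).2 hy'')).trans ?_
  field_simp
  norm_num

variable {φ φ' φ'' φ''' : ℝ → ℝ}

lemma hasDerivAt_cosBoundary {θ : ℝ} (hφ : HasDerivAt φ (φ' θ) θ) (hφ' : HasDerivAt φ' (φ'' θ) θ)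
    (hφ'' : HasDerivAt φ'' (φ''' θ) θ) (h0 : φ' θ ≠ 0) :
    HasDerivAt (fun θ => cosBoundary (φ θ) (φ' θ) (φ'' θ))
      (cos (φ θ) - (1 - cos (φ θ)) * (3 * φ'' θ ^ 2 - φ' θ * φ''' θ) / φ' θ ^ 4) θ := by
  have h := (hφ.sin.div hφ' h0).add
    (((hφ.cos.const_sub 1).mul hφ'').div (hφ'.pow 3) (pow_ne_zero 3 h0))
  refine h.congr_deriv ?_
  simp only [Pi.pow_apply, Pi.mul_apply]
  field_simp
  push_cast
  ring

lemma cosBoundary_sub_le_integral_cos {p q : ℝ} (hpq : p ≤ q)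
    (hφ : ∀ θ ∈ Icc p q, HasDerivAt φ (φ' θ) θ) (hφ' : ∀ θ ∈ Icc p q, HasDerivAt φ' (φ'' θ) θ)
    (hφ'' : ∀ θ ∈ Icc p q, HasDerivAt φ'' (φ''' θ) θ) (h0 : ∀ θ ∈ Icc p q, φ' θ ≠ 0)
    (hconv : ∀ θ ∈ Icc p q, φ' θ * φ''' θ ≤ 3 * φ'' θ ^ 2) :
    cosBoundary (φ q) (φ' q) (φ'' q) - cosBoundary (φ p) (φ' p) (φ'' p) ≤
      ∫ θ in p..q, cos (φ θ) := by
  have hder := fun θ hθ => hasDerivAt_cosBoundary (hφ θ hθ) (hφ' θ hθ) (hφ'' θ hθ) (h0 θ hθ)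
  have hcont : ContinuousOn (fun θ => cos (φ θ)) (Icc p q) :=
    continuous_cos.comp_continuousOn fun θ hθ => (hφ θ hθ).continuousAt.continuousWithinAt
  refine intervalIntegral.sub_le_integral_of_hasDeriv_right_of_le hpq
    (fun θ hθ => (hder θ hθ).continuousAt.continuousWithinAt)
    (fun θ hθ => (hder θ (Ioo_subset_Icc_self hθ)).hasDerivWithinAt) hcont.integrableOn_Icc
    fun θ hθ => sub_le_self _ ?_
  have := sub_nonneg.2 (cos_le_one (φ θ))
  have := sub_nonneg.2 (hconv θ (Ioo_subset_Icc_self hθ))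
  positivity

lemma le_integral_cos_of_abs_le {p q Y : ℝ} (hpq : p ≤ q) (hφ : ContinuousOn φ (Icc p q))
    (hY : ∀ θ ∈ Icc p q, |φ θ| ≤ Y) :
    (q - p) * (1 - Y ^ 2 / 2) ≤ ∫ θ in p..q, cos (φ θ) := by
  have hint : IntervalIntegrable (fun θ => cos (φ θ)) MeasureTheory.volume p q :=
    (continuous_cos.comp_continuousOn hφ).intervalIntegrable_of_Icc hpq
  have hle : ∀ θ ∈ Icc p q, 1 - Y ^ 2 / 2 ≤ cos (φ θ) := fun θ hθ => by
    have : φ θ ^ 2 ≤ Y ^ 2 := sq_le_sq' (abs_le.1 (hY θ hθ)).1 (abs_le.1 (hY θ hθ)).2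
    linarith [one_sub_sq_div_two_le_cos (x := φ θ)]
  simpa only [intervalIntegral.integral_const, smul_eq_mul] using
    intervalIntegral.integral_mono_on hpq intervalIntegrable_const hint hle

theorem integral_cos_pos_of_quadratic_phase {a b c η : ℝ} (hη : 0 < η) (hac : a ≤ c - η)
    (hcb : c + η ≤ b)
    (hφ : ∀ θ ∈ Icc a b, HasDerivAt φ (φ' θ) θ) (hφ' : ∀ θ ∈ Icc a b, HasDerivAt φ' (φ'' θ) θ)
    (hφ'' : ∀ θ ∈ Icc a b, HasDerivAt φ'' (φ''' θ) θ) (hmono : MonotoneOn φ' (Icc a b))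
    (hconv : ∀ θ ∈ Icc a b, φ' θ * φ''' θ ≤ 3 * φ'' θ ^ 2)
    (ha : sin (φ a) = 0) (ha'' : φ'' a = 0) (hb : sin (φ b) = 0) (hb'' : φ'' b = 0)
    (hnear : ∀ θ ∈ Icc (c - η) (c + η), |φ θ| ≤ 11 / 40)
    (hl : η * φ' (c - η) ≤ -(9 / 20)) (hr : 9 / 20 ≤ η * φ' (c + η))
    (hl'' : η ^ 2 * φ'' (c - η) ≤ 11 / 20) (hr'' : η ^ 2 * φ'' (c + η) ≤ 11 / 20) :
    0 < ∫ θ in a..b, cos (φ θ) := by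
  have hsubl : Icc a (c - η) ⊆ Icc a b := Icc_subset_Icc_right (by linarith)
  have hsubm : Icc (c - η) (c + η) ⊆ Icc a b := Icc_subset_Icc hac hcb
  have hsubr : Icc (c + η) b ⊆ Icc a b := Icc_subset_Icc_left (by linarith)
  have hcont : ContinuousOn φ (Icc a b) := fun θ hθ => (hφ θ hθ).continuousAt.continuousWithinAt
  have hneg : ∀ θ ∈ Icc a (c - η), φ' θ < 0 := fun θ hθ =>
    (hmono (hsubl hθ) ⟨hac, by linarith⟩ hθ.2).trans_lt
      (neg_of_mul_neg_right (hl.trans_lt (by norm_num)) hη.le)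
  have hpos : ∀ θ ∈ Icc (c + η) b, 0 < φ' θ := fun θ hθ =>
    (pos_of_mul_pos_right (lt_of_lt_of_le (by norm_num) hr) hη.le).trans_le
      (hmono ⟨by linarith, hcb⟩ (hsubr hθ) hθ.1)
  have hleft := cosBoundary_sub_le_integral_cos hac (fun θ hθ => hφ θ (hsubl hθ))
    (fun θ hθ => hφ' θ (hsubl hθ)) (fun θ hθ => hφ'' θ (hsubl hθ)) (fun θ hθ => (hneg θ hθ).ne)
    (fun θ hθ => hconv θ (hsubl hθ))
  have hright := cosBoundary_sub_le_integral_cos hcb (fun θ hθ => hφ θ (hsubr hθ))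
    (fun θ hθ => hφ' θ (hsubr hθ)) (fun θ hθ => hφ'' θ (hsubr hθ)) (fun θ hθ => (hpos θ hθ).ne')
    (fun θ hθ => hconv θ (hsubr hθ))
  have hmid := le_integral_cos_of_abs_le (by linarith) (hcont.mono hsubm) hnear
  have hBl := cosBoundary_le_width hη (hnear (c - η) ⟨le_rfl, by linarith⟩)
    (by rw [mul_neg]; linarith : 9 / 20 ≤ η * -φ' (c - η)) hl''
  have hBr := cosBoundary_le_width hη (hnear (c + η) ⟨by linarith, le_rfl⟩) hr hr''
  have hint : ∀ {p q}, p ≤ q → Icc p q ⊆ Icc a b →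
      IntervalIntegrable (fun θ => cos (φ θ)) MeasureTheory.volume p q := fun hpq hsub =>
    ((continuous_cos.comp_continuousOn hcont).mono hsub).intervalIntegrable_of_Icc hpq
  rw [cosBoundary_neg_deriv] at hBl
  rw [cosBoundary_of_sin_eq_zero _ ha ha''] at hleft
  rw [cosBoundary_of_sin_eq_zero _ hb hb''] at hright
  rw [← intervalIntegral.integral_add_adjacent_intervals (hint hac hsubl)
      (hint (by linarith) (Icc_subset_Icc_left hac)),
    ← intervalIntegral.integral_add_adjacent_intervals (hint (by linarith) hsubm)
      (hint hcb hsubr)]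
  linarith

end IntegrationByParts

section BesselPhase

/-- The phase of the integrand in Bessel's integral for `J_m(x)`, shifted by a constant `k`. -/
noncomputable def besselPhase (m x k θ : ℝ) : ℝ := m * θ - x * sin θ + k

/-- The phase `besselPhase m x k` is a small perturbation of `t² / (4η²)` at the points `β + t`,
`|t| ≤ η`: its Taylor coefficients of order `0` and `1` at `β` are small, that of order `2` is
exactly `1 / (4η²)`, and that of order `3` is small on the scale `η`. -/
structure IsQuadraticWindow (m x k β η : ℝ) : Prop where
  width_pos : 0 < η
  width_le : η ≤ 1 / 10
  abs_phase_le : |besselPhase m x k β| ≤ 1 / 100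
  abs_deriv_le : |m - x * cos β| ≤ 1 / 100
  curvature_eq : x * sin β * η ^ 2 = 1 / 2
  abs_third_deriv_le : |x * cos β| * η ≤ x * sin β / 10

variable {m x k β η : ℝ}

lemma hasDerivAt_besselPhase (m x k θ : ℝ) :
    HasDerivAt (besselPhase m x k) (m - x * cos θ) θ := by
  exact ((((hasDerivAt_id θ).const_mul m).sub ((hasDerivAt_sin θ).const_mul x)).add_const
    k).congr_deriv (by ring)

lemma hasDerivAt_besselPhase_deriv (m x θ : ℝ) :
    HasDerivAt (fun θ => m - x * cos θ) (x * sin θ) θ := by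
  simpa using! ((hasDerivAt_cos θ).const_mul x).const_sub m

lemma besselPhase_add (m x k β t : ℝ) :
    besselPhase m x k (β + t) = besselPhase m x k β + (m - x * cos β) * t
      + x * sin β * (1 - cos t) + x * cos β * (t - sin t) := by
  simp only [besselPhase, sin_add]
  ring

namespace IsQuadraticWindow

lemma abs_third_deriv_mul_cube_le (h : IsQuadraticWindow m x k β η) :
    |x * cos β| * η ^ 3 ≤ 1 / 20 := by
  have := mul_le_mul_of_nonneg_right h.abs_third_deriv_le (sq_nonneg η)
  linarith [h.curvature_eq]

lemma curvature_pos (h : IsQuadraticWindow m x k β η) : 0 < x * sin β :=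
  pos_of_mul_pos_left (by rw [h.curvature_eq]; norm_num) (sq_nonneg η)

lemma abs_besselPhase_add_le (h : IsQuadraticWindow m x k β η) {t : ℝ} (ht : |t| ≤ η) :
    |besselPhase m x k (β + t)| ≤ 11 / 40 := by
  have hlin : |(m - x * cos β) * t| ≤ 1 / 100 * (1 / 10) := by
    rw [abs_mul]
    exact mul_le_mul h.abs_deriv_le (ht.trans h.width_le) (abs_nonneg t) (by norm_num)
  have hquad : |x * sin β * (1 - cos t)| ≤ 1 / 4 := by
    have hcos : 1 - cos t ≤ η ^ 2 / 2 := by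
      have := sq_le_sq' (abs_le.1 ht).1 (abs_le.1 ht).2
      linarith [one_sub_sq_div_two_le_cos (x := t)]
    rw [abs_of_nonneg (mul_nonneg h.curvature_pos.le (sub_nonneg.2 (cos_le_one t)))]
    linarith [mul_le_mul_of_nonneg_left hcos h.curvature_pos.le, h.curvature_eq]
  have hcub : |x * cos β * (t - sin t)| ≤ 1 / 120 := by
    have hsin : |t - sin t| ≤ η ^ 3 / 6 := (abs_sub_sin_le t).trans (by gcongr)
    rw [abs_mul]
    linarith [mul_le_mul_of_nonneg_left hsin (abs_nonneg (x * cos β)),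
      h.abs_third_deriv_mul_cube_le]
  rw [besselPhase_add]
  refine (abs_add_le _ _).trans ?_
  linarith [abs_add_three (besselPhase m x k β) ((m - x * cos β) * t)
    (x * sin β * (1 - cos t)), h.abs_phase_le]

lemma abs_width_mul_deriv_sub_le (h : IsQuadraticWindow m x k β η) :
    |η * (m - x * cos β + x * cos β * (1 - cos η))| ≤ 7 / 250 := by
  have hη := h.width_pos
  have hcos : |1 - cos η| ≤ η ^ 2 / 2 := by
    rw [abs_of_nonneg (sub_nonneg.2 (cos_le_one η))]
    linarith [one_sub_sq_div_two_le_cos (x := η)]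
  have hlin : η * |m - x * cos β| ≤ 1 / 10 * (1 / 100) := by
    gcongr
    exacts [h.width_le, h.abs_deriv_le]
  calc |η * (m - x * cos β + x * cos β * (1 - cos η))|
      ≤ η * (|m - x * cos β| + |x * cos β| * |1 - cos η|) := by
        rw [abs_mul, abs_of_pos hη, ← abs_mul (x * cos β)]
        gcongr
        exact abs_add_le _ _
    _ ≤ η * (|m - x * cos β| + |x * cos β| * (η ^ 2 / 2)) := by gcongr
    _ ≤ 7 / 250 := by linarith [h.abs_third_deriv_mul_cube_le]

lemma le_width_mul_curvature_mul_sin (h : IsQuadraticWindow m x k β η) :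
    499 / 1000 ≤ η * (x * sin β * sin η) := by
  have hη := h.width_pos
  have hA := h.curvature_pos
  have hη2 : η ^ 2 ≤ (1 / 10) ^ 2 := pow_le_pow_left₀ hη.le h.width_le 2
  calc (499 / 1000 : ℝ) ≤ x * sin β * η ^ 2 * (1 - η ^ 2 / 6) := by rw [h.curvature_eq]; linarith
    _ = η * (x * sin β * (η - η ^ 3 / 6)) := by ring
    _ ≤ η * (x * sin β * sin η) := by gcongr; exact sin_ge_sub_cube hη.le

lemma le_width_mul_deriv_right (h : IsQuadraticWindow m x k β η) :
    9 / 20 ≤ η * (m - x * cos (β + η)) := by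
  have heq : η * (m - x * cos (β + η)) =
      η * (m - x * cos β + x * cos β * (1 - cos η)) + η * (x * sin β * sin η) := by
    rw [cos_add]; ring
  linarith [(abs_le.1 h.abs_width_mul_deriv_sub_le).1, h.le_width_mul_curvature_mul_sin]

lemma width_mul_deriv_left_le (h : IsQuadraticWindow m x k β η) :
    η * (m - x * cos (β - η)) ≤ -(9 / 20) := by
  have heq : η * (m - x * cos (β - η)) =
      η * (m - x * cos β + x * cos β * (1 - cos η)) - η * (x * sin β * sin η) := by
    rw [cos_sub]; ring
  linarith [(abs_le.1 h.abs_width_mul_deriv_sub_le).2, h.le_width_mul_curvature_mul_sin]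

lemma sq_width_mul_curvature_le (h : IsQuadraticWindow m x k β η) {t : ℝ} (ht : |t| ≤ η) :
    η ^ 2 * (x * sin (β + t)) ≤ 11 / 20 := by
  have hη := h.width_pos
  have hsin : x * cos β * sin t ≤ |x * cos β| * η := (le_abs_self _).trans <| by
    rw [abs_mul]
    gcongr
    exact abs_sin_le_abs.trans ht
  have hcos : x * sin β * cos t ≤ x * sin β :=
    mul_le_of_le_one_right h.curvature_pos.le (cos_le_one t)
  calc η ^ 2 * (x * sin (β + t)) = η ^ 2 * (x * sin β * cos t + x * cos β * sin t) := by
        rw [sin_add]; ring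
    _ ≤ η ^ 2 * (x * sin β + |x * cos β| * η) := by gcongr
    _ ≤ 11 / 20 := by linarith [h.curvature_eq, h.abs_third_deriv_mul_cube_le]

theorem integral_cos_pos (h : IsQuadraticWindow m x k β η) (hm : 0 ≤ m) (hmx : m ≤ x)
    (hηβ : η ≤ β) (hβη : β + η ≤ π) (hk : sin k = 0) (hk' : sin (m * π + k) = 0) :
    0 < ∫ θ in (0 : ℝ)..π, cos (besselPhase m x k θ) := by
  have hx : 0 ≤ x := hm.trans hmx
  have hη := h.width_pos
  refine integral_cos_pos_of_quadratic_phase (c := β) (η := η) (φ''' := fun θ => x * cos θ) hη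
    (sub_nonneg.2 hηβ) hβη (fun θ _ => hasDerivAt_besselPhase m x k θ)
    (fun θ _ => hasDerivAt_besselPhase_deriv m x θ) (fun θ _ => (hasDerivAt_sin θ).const_mul x)
    ?mono ?conv (by simpa [besselPhase] using hk) (by simp) (by simpa [besselPhase] using hk')
    (by simp) (fun θ hθ => ?near) h.width_mul_deriv_left_le h.le_width_mul_deriv_right
    ?curvature_left (h.sq_width_mul_curvature_le (abs_of_pos hη).le)
  case mono =>
    exact fun θ hθ ψ hψ hle => sub_le_sub_left
      (mul_le_mul_of_nonneg_left (strictAntiOn_cos.antitoneOn hθ hψ hle) hx) m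
  case conv =>
    intro θ _
    have hmcos : m * cos θ ≤ x := (mul_le_of_le_one_right hm (cos_le_one θ)).trans hmx
    have : 3 * (x * sin θ) ^ 2 - (m - x * cos θ) * (x * cos θ)
        = x * (2 * x * sin θ ^ 2 + (x - m * cos θ)) := by
      linear_combination x ^ 2 * sin_sq_add_cos_sq θ
    have : 0 ≤ x * (2 * x * sin θ ^ 2 + (x - m * cos θ)) := by
      have := sub_nonneg.2 hmcos
      positivity
    linarith
  case near =>
    simpa using h.abs_besselPhase_add_le (t := θ - β)
      (abs_le.2 ⟨by linarith [hθ.1], by linarith [hθ.2]⟩)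
  case curvature_left =>
    exact h.sq_width_mul_curvature_le (by rw [abs_neg, abs_of_pos hη])

end IsQuadraticWindow

end BesselPhase

section BesselIntegral

open Complex (I)
open scoped Nat

lemma integral_exp_int_mul_I (k : ℤ) :
    ∫ θ in -π..π, Complex.exp (k * I * θ) = if k = 0 then 2 * π else 0 := by
  split_ifs with hk
  · simp [hk, two_mul]
  · have hkI : (k : ℂ) * I ≠ 0 := by simp [hk]
    have hperiod : Complex.exp (k * I * π) = Complex.exp (k * I * (-π : ℝ)) :=
      Complex.exp_eq_exp_iff_exists_int.2 ⟨k, by push_cast; ring⟩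
    rw [integral_exp_mul_complex hkI, hperiod, sub_self, zero_div, Complex.ofReal_zero]

lemma hasSum_integral_trigonometricSeries {ι : Type*} [Countable ι] {c : ι → ℂ} {n : ι → ℤ}
    {f : ℝ → ℂ} (hc : Summable fun i => ‖c i‖)
    (hf : ∀ θ : ℝ, HasSum (fun i => c i * Complex.exp (n i * I * θ)) (f θ)) (k : ℤ) :
    HasSum (fun i => if n i = k then 2 * π * c i else 0)
      (∫ θ in -π..π, f θ * Complex.exp (-(k * I * θ))) := by
  have hnorm (i : ι) (θ : ℝ) : ‖Complex.exp ((n i - k : ℤ) * I * θ)‖ = 1 := by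
    simp [Complex.norm_exp]
  have hmul (θ : ℝ) : HasSum (fun i => c i * Complex.exp ((n i - k : ℤ) * I * θ))
      (f θ * Complex.exp (-(k * I * θ))) := by
    refine ((hf θ).mul_right (Complex.exp (-(k * I * θ)))).congr_fun fun i => ?_
    rw [mul_assoc (c i), ← Complex.exp_add]
    push_cast
    ring_nf
  refine (intervalIntegral.hasSum_integral_of_dominated_convergence (fun i _ => ‖c i‖)
    (fun i => Continuous.aestronglyMeasurable (by fun_prop))
    (fun i => .of_forall fun θ _ => (by rw [norm_mul, hnorm, mul_one])) (.of_forall fun _ _ => hc)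
    intervalIntegrable_const (.of_forall fun θ _ => hmul θ)).congr_fun fun i => ?_
  rw [intervalIntegral.integral_const_mul, integral_exp_int_mul_I]
  simp only [sub_eq_zero]
  split_ifs
  · push_cast; ring
  · simp

lemma summable_norm_expSeries_mul_expSeries (u v : ℂ) :
    Summable fun p : ℕ × ℕ => ‖u ^ p.1 / p.1 ! * (v ^ p.2 / p.2 !)‖ :=
  Summable.mul_norm (f := fun n : ℕ => u ^ n / n !) (g := fun n : ℕ => v ^ n / n !)
    (NormedSpace.norm_expSeries_div_summable u) (NormedSpace.norm_expSeries_div_summable v)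

lemma hasSum_exp_add (u v : ℂ) :
    HasSum (fun p : ℕ × ℕ => u ^ p.1 / p.1 ! * (v ^ p.2 / p.2 !)) (Complex.exp (u + v)) := by
  rw [Complex.exp_add, Complex.exp_eq_exp_ℂ]
  exact HasSum.mul (f := fun n : ℕ => u ^ n / n !) (g := fun n : ℕ => v ^ n / n !)
    (NormedSpace.expSeries_div_hasSum_exp u) (NormedSpace.expSeries_div_hasSum_exp v)
    (summable_norm_expSeries_mul_expSeries u v).of_norm

lemma hasSum_exp_mul_sin_mul_I (x θ : ℝ) :
    HasSum (fun p : ℕ × ℕ => (x / 2 : ℂ) ^ p.1 / p.1 ! * ((-(x / 2) : ℂ) ^ p.2 / p.2 !) *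
      Complex.exp ((p.1 - p.2 : ℤ) * I * θ)) (Complex.exp (x * Complex.sin θ * I)) := by
  have hsin : (x * Complex.sin θ * I : ℂ) =
      x / 2 * Complex.exp (θ * I) + -(x / 2) * Complex.exp (-(θ * I)) := by
    rw [← neg_mul]
    linear_combination (x / 2 * I : ℂ) * Complex.two_sin θ + x / 2 * (Complex.exp (-θ * I) -
      Complex.exp (θ * I)) * Complex.I_sq
  rw [hsin]
  refine (hasSum_exp_add _ _).congr_fun fun p => ?_
  have hexp : Complex.exp ((p.1 - p.2 : ℤ) * I * θ) =
      Complex.exp (θ * I) ^ p.1 * Complex.exp (-(θ * I)) ^ p.2 := by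
    rw [← Complex.exp_nat_mul, ← Complex.exp_nat_mul, ← Complex.exp_add]
    push_cast
    ring_nf
  rw [hexp, mul_pow, mul_pow]
  ring

lemma besselJ_natCast (ℓ : ℕ) (x : ℝ) :
    besselJ ℓ x = ∑' m : ℕ, (-1) ^ m / (m ! * (m + ℓ)!) * (x / 2) ^ (2 * m + ℓ) := by
  refine tsum_congr fun m => ?_
  rw [← Nat.cast_add, Gamma_nat_eq_factorial, ← rpow_natCast]
  norm_cast

lemma hasSum_integral_exp_mul_sin_mul_I (ℓ : ℕ) (x : ℝ) :
    HasSum (fun m : ℕ =>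
        ((2 * π * ((-1) ^ m / (m ! * (m + ℓ)!) * (x / 2) ^ (2 * m + ℓ)) : ℝ) : ℂ))
      (∫ θ in -π..π, Complex.exp (x * Complex.sin θ * I) * Complex.exp (-((ℓ : ℤ) * I * θ))) := by
  have hsum := hasSum_integral_trigonometricSeries
    (summable_norm_expSeries_mul_expSeries (x / 2) (-(x / 2))) (hasSum_exp_mul_sin_mul_I x) ℓ
  have hinj : Function.Injective fun m : ℕ => (m + ℓ, m) := fun a b h => (Prod.ext_iff.1 h).2
  rw [← hinj.hasSum_iff] at hsum
  · refine hsum.congr_fun fun m => ?_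
    simp only [Function.comp_apply]
    rw [if_pos (by push_cast; ring), neg_pow (x / 2 : ℂ)]
    push_cast
    ring
  · rintro ⟨p, q⟩ hpq
    refine if_neg fun h : (p - q : ℤ) = ℓ => hpq ⟨q, Prod.ext ?_ rfl⟩
    change q + ℓ = p
    omega

theorem pi_mul_besselJ_natCast_eq_integral (ℓ : ℕ) (x : ℝ) :
    π * besselJ ℓ x = ∫ θ in (0 : ℝ)..π, cos (ℓ * θ - x * sin θ) := by
  have hcont : Continuous fun θ : ℝ => cos (ℓ * θ - x * sin θ) := by fun_prop
  have hre : (∫ θ in -π..π, Complex.exp (x * Complex.sin θ * I) *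
      Complex.exp (-((ℓ : ℤ) * I * θ))).re = ∫ θ in -π..π, cos (ℓ * θ - x * sin θ) := by
    rw [← Complex.reCLM_apply, ← Complex.reCLM.intervalIntegral_comp_comm
      (Continuous.intervalIntegrable (by fun_prop) _ _)]
    refine intervalIntegral.integral_congr fun θ _ => ?_
    have hexp : Complex.exp (x * Complex.sin θ * I) * Complex.exp (-((ℓ : ℤ) * I * θ)) =
        Complex.exp ((x * sin θ - ℓ * θ : ℝ) * I) := by
      rw [← Complex.exp_add]
      push_cast
      ring_nf
    simp only [Complex.reCLM_apply]
    rw [hexp, Complex.exp_ofReal_mul_I_re, ← cos_neg, neg_sub]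
  have heven : ∫ θ in -π..0, cos (ℓ * θ - x * sin θ) =
      ∫ θ in (0 : ℝ)..π, cos (ℓ * θ - x * sin θ) := by
    rw [← neg_zero, ← intervalIntegral.integral_comp_neg, neg_zero]
    refine intervalIntegral.integral_congr fun θ _ => ?_
    simp only [sin_neg]
    rw [← cos_neg]
    ring_nf
  have hsum := Complex.hasSum_re (hasSum_integral_exp_mul_sin_mul_I ℓ x)
  simp only [Complex.ofReal_re] at hsum
  rw [hre, ← intervalIntegral.integral_add_adjacent_intervals (hcont.intervalIntegrable _ 0)
    (hcont.intervalIntegrable 0 _), heven] at hsum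
  have htsum := hsum.tsum_eq
  rw [tsum_mul_left, ← besselJ_natCast] at htsum
  linarith

end BesselIntegral

section BesselZeros

open Complex (regularizedHGFun regularizedHGFunSeries regularizedHGFunCoeff)

lemma analyticOnNhd_regularizedHGFun {a b : Multiset ℂ} (h : a.card ≤ b.card) :
    AnalyticOnNhd ℂ (regularizedHGFun a b) univ := by
  have hrad := Complex.radius_regularizedHGFunSeries_eq_top h
  have hball := (regularizedHGFunSeries a b).hasFPowerSeriesOnBall (by simp [hrad])
  exact fun z _ => hball.analyticOnNhd z (by simp [hrad])

lemma regularizedHGFun_eq_tsum (a b : Multiset ℂ) (z : ℂ) :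
    regularizedHGFun a b z = ∑' n, regularizedHGFunCoeff a b n * z ^ n := by
  simp [regularizedHGFun, FormalMultilinearSeries.sum, mul_comm]

lemma regularizedHGFun_zero (a b : Multiset ℂ) :
    regularizedHGFun a b 0 = regularizedHGFunCoeff a b 0 := by
  rw [regularizedHGFun_eq_tsum, tsum_eq_single 0 fun n hn => by simp [hn]]
  simp

lemma ofReal_besselJ (ν : ℝ) {x : ℝ} (hx : 0 < x) :
    (besselJ ν x : ℂ) =
      ((x / 2) ^ ν : ℝ) * regularizedHGFun 0 {(ν + 1 : ℂ)} (-(x / 2) ^ 2) := by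
  rw [besselJ, Complex.ofReal_tsum, regularizedHGFun_eq_tsum, ← tsum_mul_left]
  refine tsum_congr fun m => ?_
  have hpow : (x / 2) ^ (2 * (m : ℝ) + ν) = ((x / 2) ^ 2) ^ m * (x / 2) ^ ν := by
    rw [rpow_add (by positivity), rpow_mul (by positivity)]
    norm_cast
  have hGamma : (Gamma (m + ν + 1) : ℂ) = Complex.Gamma (ν + 1 + m) := by
    rw [← Complex.Gamma_ofReal]
    push_cast
    ring_nf
  simp only [regularizedHGFunCoeff, hpow, Multiset.map_zero, Multiset.prod_zero,
    Multiset.map_singleton, Multiset.prod_singleton, ← hGamma, neg_pow ((x / 2 : ℂ) ^ 2)]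
  push_cast
  ring

theorem finite_setOf_isPosBesselZero_le {ν : ℝ} (hν : -1 < ν) (R : ℝ) :
    {j | IsPosBesselZero ν j ∧ j ≤ R}.Finite := by
  set F := regularizedHGFun 0 {(ν + 1 : ℂ)}
  have hF0 : F 0 ≠ 0 := by
    have hGamma : Complex.Gamma (ν + 1) ≠ 0 := by
      rw [← Complex.ofReal_one, ← Complex.ofReal_add, Complex.Gamma_ofReal]
      exact_mod_cast (Gamma_pos_of_pos (by linarith : 0 < ν + 1)).ne'
    simpa [F, regularizedHGFun_zero, regularizedHGFunCoeff] using hGamma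
  have hzeros : (Metric.closedBall 0 ((R / 2) ^ 2) \ F ⁻¹' {0}ᶜ).Finite :=
    (isCompact_closedBall 0 _).finite_sdiff_of_mem_codiscreteWithin <|
      codiscreteWithin_mono (subset_univ _) <|
        (analyticOnNhd_regularizedHGFun (by simp)).preimage_zero_mem_codiscrete hF0
  refine Set.Finite.of_finite_image (f := fun j : ℝ => (-(j / 2) ^ 2 : ℂ)) (hzeros.subset ?_) ?_
  · rintro _ ⟨j, ⟨⟨hj0, hj⟩, hjR⟩, rfl⟩
    have hFj : F (-(j / 2) ^ 2) = 0 := by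
      have hmul := ofReal_besselJ ν hj0
      rw [hj, Complex.ofReal_zero, zero_eq_mul] at hmul
      exact hmul.resolve_left (by exact_mod_cast (rpow_pos_of_pos (half_pos hj0) ν).ne')
    refine ⟨?_, by simp [hFj]⟩
    simp only [Metric.mem_closedBall, dist_zero_right, norm_neg, norm_pow, norm_div,
      Complex.norm_real, norm_eq_abs, abs_of_pos hj0, Complex.norm_ofNat]
    gcongr
  · intro i hi j hj hij
    have hsq : (i / 2) ^ 2 = (j / 2) ^ 2 := by exact_mod_cast neg_injective hij
    have := (sq_eq_sq₀ (half_pos hi.1.1).le (half_pos hj.1.1).le).1 hsq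
    linarith

theorem finite_setOf_isPosBesselZero_natCast_le (N : ℕ) (R : ℝ) :
    {p : ℕ × ℝ | IsPosBesselZero p.1 p.2 ∧ p.1 ≤ N ∧ p.2 ≤ R}.Finite := by
  have hν (ℓ : ℕ) : (-1 : ℝ) < ℓ := neg_one_lt_zero.trans_le ℓ.cast_nonneg
  refine ((Set.finite_Iic N).biUnion fun ℓ _ =>
    (finite_setOf_isPosBesselZero_le (hν ℓ) R).image (Prod.mk ℓ)).subset ?_
  rintro ⟨ℓ, j⟩ ⟨hzero, hℓ, hj⟩
  exact mem_biUnion hℓ ⟨j, ⟨hzero, hj⟩, rfl⟩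

end BesselZeros

section SpectralGap

/-- The Dirichlet eigenvalue `j² - α²ℓ²` of `-Δ + α²∂_θ²` on the unit disk that belongs to the pair
`(ℓ, j)` of an angular frequency and a zero of `J_ℓ`. -/
def waveEigenvalue (α : ℝ) (p : ℕ × ℝ) : ℝ := p.2 ^ 2 - α ^ 2 * (p.1 : ℝ) ^ 2

variable {Z : Set (ℕ × ℝ)} {α δ : ℝ}

lemma waveEigenvalue_eq_mul (α : ℝ) (p : ℕ × ℝ) :
    waveEigenvalue α p = (p.2 - α * p.1) * (p.2 + α * p.1) := by
  unfold waveEigenvalue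
  ring

lemma mul_le_abs_waveEigenvalue {p : ℕ × ℝ} (hα : 0 ≤ α) (hp : 0 ≤ p.2)
    (h : δ ≤ |p.2 - α * p.1|) : δ * p.2 ≤ |waveEigenvalue α p| := by
  have hadd : p.2 ≤ p.2 + α * p.1 := le_add_of_nonneg_right (by positivity)
  calc δ * p.2 ≤ |p.2 - α * p.1| * p.2 := by gcongr
    _ ≤ |p.2 - α * p.1| * (p.2 + α * p.1) := by gcongr
    _ = |waveEigenvalue α p| := by
      rw [waveEigenvalue_eq_mul, abs_mul, abs_of_nonneg (hp.trans hadd)]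

theorem finite_setOf_abs_waveEigenvalue_lt (hα : 0 ≤ α) (hδ : 0 ≤ δ) (hpos : ∀ p ∈ Z, 0 < p.2)
    (hfin : ∀ (N : ℕ) (R : ℝ), {p ∈ Z | p.1 ≤ N ∧ p.2 ≤ R}.Finite)
    (hsep : ∀ᶠ ℓ : ℕ in atTop, ∀ j, (ℓ, j) ∈ Z → δ ≤ |j - α * ℓ|) :
    {p ∈ Z | |waveEigenvalue α p| < δ * p.2}.Finite := by
  obtain ⟨L, hL⟩ := eventually_atTop.1 hsep
  refine (hfin L (δ + α ^ 2 * L ^ 2 + 1)).subset fun p ⟨hp, hlt⟩ => ?_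
  have hpL : p.1 ≤ L := by
    by_contra! hLp
    exact hlt.not_ge (mul_le_abs_waveEigenvalue hα (hpos p hp).le (hL _ hLp.le _ hp))
  refine ⟨hp, hpL, ?_⟩
  by_contra! hbig
  have hsq : α ^ 2 * (p.1 : ℝ) ^ 2 ≤ α ^ 2 * L ^ 2 := by gcongr
  have hαL : 0 ≤ α ^ 2 * (L : ℝ) ^ 2 := by positivity
  have hmul : (δ + α ^ 2 * L ^ 2 + 1) * p.2 ≤ p.2 * p.2 := by gcongr; exact (hpos p hp).le
  have hαLp : α ^ 2 * (L : ℝ) ^ 2 ≤ α ^ 2 * L ^ 2 * p.2 :=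
    le_mul_of_one_le_right hαL (by linarith)
  have hlt' : p.2 ^ 2 - α ^ 2 * (p.1 : ℝ) ^ 2 < δ * p.2 := (le_abs_self _).trans_lt hlt
  linarith [hpos p hp]

theorem exists_pos_forall_waveEigenvalue_eq_zero_or_le (hα : 0 ≤ α) (hδ : 0 < δ)
    (hpos : ∀ p ∈ Z, 0 < p.2) (hfin : ∀ (N : ℕ) (R : ℝ), {p ∈ Z | p.1 ≤ N ∧ p.2 ≤ R}.Finite)
    (hsep : ∀ᶠ ℓ : ℕ in atTop, ∀ j, (ℓ, j) ∈ Z → δ ≤ |j - α * ℓ|) :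
    ∃ c > 0, ∀ p ∈ Z, waveEigenvalue α p = 0 ∨ c * p.2 ≤ |waveEigenvalue α p| := by
  have hsmall : ∀ᶠ c in nhdsWithin (0 : ℝ) (Ioi 0), ∀ p ∈ {p ∈ Z | |waveEigenvalue α p| < δ * p.2},
      waveEigenvalue α p = 0 ∨ c * p.2 ≤ |waveEigenvalue α p| := by
    refine (finite_setOf_abs_waveEigenvalue_lt hα hδ.le hpos hfin hsep).eventually_all.2
      fun p _ => ?_
    rcases eq_or_ne (waveEigenvalue α p) 0 with h0 | h0
    · exact .of_forall fun _ => .inl h0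
    · have htendsto : Tendsto (fun c : ℝ => c * p.2) (nhdsWithin 0 (Ioi 0)) (nhds 0) :=
        ((continuous_mul_const p.2).tendsto' 0 0 (zero_mul _)).mono_left nhdsWithin_le_nhds
      exact (htendsto.eventually_le_const (abs_pos.2 h0)).mono fun _ => .inr
  obtain ⟨c, hc, hc0, hcδ⟩ := (hsmall.and (Ioc_mem_nhdsGT hδ)).exists
  refine ⟨c, hc0, fun p hp => ?_⟩
  rcases lt_or_ge |waveEigenvalue α p| (δ * p.2) with hlt | hge
  · exact hc p ⟨hp, hlt⟩
  · exact .inr ((mul_le_mul_of_nonneg_right hcδ (hpos p hp).le).trans hge)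

theorem finite_setOf_abs_waveEigenvalue_le (hα : 0 < α) (hδ : 0 < δ) (hpos : ∀ p ∈ Z, 0 < p.2)
    (hfin : ∀ (N : ℕ) (R : ℝ), {p ∈ Z | p.1 ≤ N ∧ p.2 ≤ R}.Finite)
    (hsep : ∀ᶠ ℓ : ℕ in atTop, ∀ j, (ℓ, j) ∈ Z → δ ≤ |j - α * ℓ|) (M : ℝ) :
    {p ∈ Z | |waveEigenvalue α p| ≤ M}.Finite := by
  obtain ⟨N, hN⟩ := exists_nat_ge (((M / δ) ^ 2 + M) / α ^ 2)
  refine ((finite_setOf_abs_waveEigenvalue_lt hα.le hδ.le hpos hfin hsep).union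
    (hfin N (M / δ))).subset fun p ⟨hp, hle⟩ => ?_
  rcases lt_or_ge |waveEigenvalue α p| (δ * p.2) with hlt | hge
  · exact .inl ⟨hp, hlt⟩
  have hj : p.2 ≤ M / δ := (le_div_iff₀' hδ).2 (hge.trans hle)
  refine .inr ⟨hp, ?_, hj⟩
  by_contra! hNp
  have hlow : -M ≤ p.2 ^ 2 - α ^ 2 * (p.1 : ℝ) ^ 2 := (abs_le.1 hle).1
  refine lt_irrefl (α ^ 2 * (p.1 : ℝ) ^ 2) ?_
  calc α ^ 2 * (p.1 : ℝ) ^ 2 ≤ p.2 ^ 2 + M := by linarith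
    _ ≤ (M / δ) ^ 2 + M := by gcongr; exact (hpos p hp).le
    _ ≤ α ^ 2 * N := (div_le_iff₀' (by positivity)).1 hN
    _ < α ^ 2 * (p.1 : ℝ) := by gcongr
    _ ≤ α ^ 2 * (p.1 : ℝ) ^ 2 := by gcongr; exact_mod_cast Nat.le_self_pow two_ne_zero p.1

lemma not_accPt_image_of_finite_norm_le {ι E : Type*} [NormedAddCommGroup E] {f : ι → E}
    {s : Set ι} (h : ∀ M, {i ∈ s | ‖f i‖ ≤ M}.Finite) (y : E) : ¬AccPt y (𝓟 (f '' s)) := by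
  intro hacc
  have hnhds : {z | ‖z‖ ≤ ‖y‖ + 1} ∈ nhds y :=
    (continuous_norm.tendsto y).eventually_le_const (lt_add_one _)
  refine Set.Infinite.of_accPt (hacc.nhds_inter hnhds) (((h (‖y‖ + 1)).image f).subset ?_)
  rintro _ ⟨hle, i, hi, rfl⟩
  exact ⟨i, ⟨hi, hle⟩, rfl⟩

end SpectralGap

section Resonance

lemma exists_le_sub_arctan_eq {y : ℝ} (hy : 0 ≤ y) : ∃ a ≥ y, a - arctan a = y := by
  have hcont : ContinuousOn (fun a => a - arctan a) (Icc y (y + π / 2)) := by fun_prop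
  have hle : y - arctan y ≤ y := sub_le_self y (arctan_nonneg.2 hy)
  have hge : y ≤ y + π / 2 - arctan (y + π / 2) := by
    linarith [arctan_lt_pi_div_two (y + π / 2)]
  obtain ⟨a, ha, heq⟩ := intermediate_value_Icc (by linarith [pi_pos]) hcont ⟨hle, hge⟩
  exact ⟨a, ha.1, heq⟩

lemma exists_natCast_lt_sub_arctan_eq_nat_mul_pi (n : ℕ) :
    ∃ a : ℝ, n < a ∧ ∃ k : ℕ, a - arctan a = k * π := by
  obtain ⟨a, hle, ha⟩ := exists_le_sub_arctan_eq (y := (n + 1 : ℕ) * π) (by positivity)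
  refine ⟨a, lt_of_lt_of_le ?_ hle, n + 1, ha⟩
  calc (n : ℝ) < (n + 1 : ℕ) := by simp
    _ ≤ (n + 1 : ℕ) * π := le_mul_of_one_le_right (by positivity) (by linarith [pi_gt_three])

lemma one_lt_sqrt_one_add_sq {a : ℝ} (ha : 0 < a) : 1 < √(1 + a ^ 2) :=
  (lt_sqrt zero_le_one).2 (by linarith [pow_pos ha 2])

lemma sqrt_one_add_sq_mul_cos_arctan (a : ℝ) : √(1 + a ^ 2) * cos (arctan a) = 1 := by
  rw [cos_arctan, mul_one_div_cancel (by positivity)]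

lemma sqrt_one_add_sq_mul_sin_arctan (a : ℝ) : √(1 + a ^ 2) * sin (arctan a) = a := by
  rw [sin_arctan, mul_div_cancel₀ a (by positivity)]

lemma exists_mul_sq_eq_half {A ε : ℝ} (hε : 0 < ε) (hA : 1 / (2 * ε ^ 2) ≤ A) :
    ∃ η, 0 < η ∧ η ≤ ε ∧ A * η ^ 2 = 1 / 2 := by
  have hA0 : 0 < A := lt_of_lt_of_le (by positivity) hA
  refine ⟨√(1 / (2 * A)), by positivity, sqrt_le_iff.2 ⟨hε.le, ?_⟩, ?_⟩
  · rw [div_le_iff₀ (by positivity)] at hA ⊢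
    linarith
  · rw [sq_sqrt (by positivity)]
    field_simp

-- Put `β = arctan a`, so that `√(1 + a²) = sec β`, and `x = ℓ sec β + s`. The phase at `β` is then
-- `ℓ (β - tan β) + n ℓ π - s sin β = -s sin β`, and its derivative there is `-s cos β`.
theorem eventually_exists_isQuadraticWindow {a ε : ℝ} {n : ℕ} (ha : 0 < a) (hε : 0 < ε)
    (han : a - arctan a = n * π) :
    ∀ᶠ ℓ : ℕ in atTop, ∀ x, |x - √(1 + a ^ 2) * ℓ| ≤ 1 / 100 →
      ∃ η ≤ ε, IsQuadraticWindow ℓ x ((n * ℓ : ℕ) * π) (arctan a) η := by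
  set β := arctan a
  set ε' := min ε (min (1 / 10) (a / 20))
  have hε' : 0 < ε' := by positivity
  filter_upwards [tendsto_natCast_atTop_atTop.eventually_ge_atTop ((1 / (2 * ε' ^ 2) + 1) / a)]
    with ℓ hℓ x hx
  set s := x - √(1 + a ^ 2) * ℓ with hs
  have hcos : x * cos β = ℓ + s * cos β := by
    rw [hs]; linear_combination (ℓ : ℝ) * sqrt_one_add_sq_mul_cos_arctan a
  have hsin : x * sin β = a * ℓ + s * sin β := by
    rw [hs]; linear_combination (ℓ : ℝ) * sqrt_one_add_sq_mul_sin_arctan a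
  have hscos : |s * cos β| ≤ 1 / 100 := by
    rw [abs_mul]; exact (mul_le_of_le_one_right (abs_nonneg s) (abs_cos_le_one β)).trans hx
  have hssin : |s * sin β| ≤ 1 / 100 := by
    rw [abs_mul]; exact (mul_le_of_le_one_right (abs_nonneg s) (abs_sin_le_one β)).trans hx
  have haℓ : 1 / (2 * ε' ^ 2) + 1 ≤ a * ℓ := (div_le_iff₀' ha).1 hℓ
  obtain ⟨η, hη0, hη, hcurvη⟩ := exists_mul_sq_eq_half (A := x * sin β) hε'
    (by linarith [(abs_le.1 hssin).1])
  obtain ⟨hηε, hη10, hηa⟩ : η ≤ ε ∧ η ≤ 1 / 10 ∧ η ≤ a / 20 := by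
    simpa only [ε', le_min_iff] using hη
  refine ⟨η, hηε, hη0, hη10, ?_, ?_, hcurvη, ?_⟩
  · have : besselPhase ℓ x ((n * ℓ : ℕ) * π) β = -(s * sin β) := by
      simp only [besselPhase]
      push_cast
      linear_combination -hsin - (ℓ : ℝ) * han
    rwa [this, abs_neg]
  · rwa [hcos, sub_add_cancel_left, abs_neg]
  · have habs : |x * cos β| ≤ ℓ + 1 / 100 := by
      rw [hcos]
      exact (abs_add_le _ _).trans (by rw [Nat.abs_cast]; gcongr)
    have hε'pos : 0 < 1 / (2 * ε' ^ 2) := by positivity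
    have hmul : |x * cos β| * η ≤ ℓ * (a / 20) + 1 / 100 * (1 / 10) :=
      calc |x * cos β| * η ≤ (ℓ + 1 / 100) * η := by gcongr
        _ = ℓ * η + 1 / 100 * η := add_mul _ _ _
        _ ≤ ℓ * (a / 20) + 1 / 100 * (1 / 10) := by gcongr
    linarith [(abs_le.1 hssin).1]

theorem eventually_le_abs_sub_of_isPosBesselZero {a : ℝ} {n : ℕ} (ha : 0 < a)
    (han : a - arctan a = n * π) :
    ∀ᶠ ℓ : ℕ in atTop, ∀ j, IsPosBesselZero ℓ j → 1 / 100 ≤ |j - √(1 + a ^ 2) * ℓ| := by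
  have hβ : 0 < arctan a := arctan_pos.2 ha
  have hα := one_lt_sqrt_one_add_sq ha
  filter_upwards [eventually_exists_isQuadraticWindow ha hβ han,
    tendsto_natCast_atTop_atTop.eventually_ge_atTop (1 / 100 / (√(1 + a ^ 2) - 1))]
    with ℓ hwindow hℓ j hj
  by_contra! hclose
  obtain ⟨η, hηβ, hη⟩ := hwindow j hclose.le
  have hℓj : (ℓ : ℝ) ≤ j := by
    have := (div_le_iff₀' (sub_pos.2 hα)).1 hℓ
    linarith [(abs_lt.1 hclose).1]
  have hpos := hη.integral_cos_pos ℓ.cast_nonneg hℓj hηβ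
    (by linarith [arctan_lt_pi_div_two a]) (sin_nat_mul_pi _)
    (by rw [← add_mul, ← Nat.cast_add]; exact sin_nat_mul_pi _)
  simp only [besselPhase, cos_add_nat_mul_pi, intervalIntegral.integral_const_mul] at hpos
  rw [← pi_mul_besselJ_natCast_eq_integral, hj.2, mul_zero, mul_zero] at hpos
  exact hpos.false

end Resonance

theorem stmt_1 :
    ∃ α : ℕ → ℝ, (∀ n, 1 < α n) ∧ Tendsto α atTop atTop ∧
      ∀ n : ℕ,
        (∀ Λ : ℝ,
          {p : ℕ × ℝ | IsPosBesselZero p.1 p.2 ∧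
            p.2 ^ 2 - (α n) ^ 2 * (p.1 : ℝ) ^ 2 = Λ}.Finite) ∧
        (∃ c : ℝ, 0 < c ∧ ∀ (ℓ : ℕ) (j : ℝ), IsPosBesselZero ℓ j →
          j ^ 2 - (α n) ^ 2 * (ℓ : ℝ) ^ 2 = 0 ∨
          |j ^ 2 - (α n) ^ 2 * (ℓ : ℝ) ^ 2| ≥ c * j) ∧
        (∀ Λ : ℝ, ¬ AccPt Λ (Filter.principal
          {x : ℝ | ∃ (ℓ : ℕ) (j : ℝ), IsPosBesselZero ℓ j ∧
            x = j ^ 2 - (α n) ^ 2 * (ℓ : ℝ) ^ 2})) := by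
  choose a hn k ha using exists_natCast_lt_sub_arctan_eq_nat_mul_pi
  have ha0 (n : ℕ) : 0 < a n := n.cast_nonneg.trans_lt (hn n)
  have hα (n : ℕ) := one_lt_sqrt_one_add_sq (ha0 n)
  have hα_ge (n : ℕ) : (n : ℝ) ≤ √(1 + a n ^ 2) := (hn n).le.trans (le_sqrt_of_sq_le (by linarith))
  refine ⟨fun n => √(1 + a n ^ 2), hα, tendsto_atTop_mono hα_ge tendsto_natCast_atTop_atTop,
    fun n => ?_⟩
  have hα0 : 0 < √(1 + a n ^ 2) := zero_lt_one.trans (hα n)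
  set Z : Set (ℕ × ℝ) := {p | IsPosBesselZero p.1 p.2}
  have hpos : ∀ p ∈ Z, 0 < p.2 := fun p hp => hp.1
  have hsep := eventually_le_abs_sub_of_isPosBesselZero (ha0 n) (ha n)
  have hfin := finite_setOf_abs_waveEigenvalue_le (Z := Z) hα0 (by norm_num) hpos
    finite_setOf_isPosBesselZero_natCast_le hsep
  refine ⟨fun Λ => (hfin |Λ|).subset fun p hp => ⟨hp.1, (congrArg abs hp.2).le⟩, ?_, fun Λ => ?_⟩
  · obtain ⟨c, hc, hgap⟩ := exists_pos_forall_waveEigenvalue_eq_zero_or_le (Z := Z) hα0.le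
      (by norm_num) hpos finite_setOf_isPosBesselZero_natCast_le hsep
    exact ⟨c, hc, fun ℓ j hj => hgap (ℓ, j) hj⟩
  · convert! not_accPt_image_of_finite_norm_le hfin Λ using 3
    ext y
    simp [Z, waveEigenvalue, eq_comm]
end

section
/- Define g : (1, ∞) → ℝ by g(t) = arccos(1/t) / √(1 − 1/t²). Then for every t > 1, g is differentiable at t with derivative g'(t) = (1/(t² − 1)) · (1 − arccos(1/t)/√(t² − 1)), this derivative is strictly positive, and consequently g is strictly increasing on (1, ∞). -/
open Real Set

/-- The function `g(t) = arccos(1/t) / √(1 - 1/t²)`. -/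
noncomputable def gFun (t : ℝ) : ℝ := Real.arccos (1 / t) / Real.sqrt (1 - 1 / t ^ 2)

/-!
Writing `θ = arccos (1 / t)`, so that `t = sec θ`, one has `g t = θ / sin θ` and
`√(t ^ 2 - 1) = tan θ`. The quotient rule therefore gives `g'` as a positive multiple of
`1 - θ / tan θ`, and its positivity is the inequality `θ < tan θ` on `(0, π / 2)`.
-/

theorem sqrt_one_sub_one_div_sq {t : ℝ} (ht : t ≠ 0) :
    √(1 - 1 / t ^ 2) = √(t ^ 2 - 1) / |t| := by
  rw [one_sub_div (pow_ne_zero 2 ht), sqrt_div' _ (sq_nonneg t), sqrt_sq_eq_abs]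

theorem hasDerivAt_arccos_one_div {t : ℝ} (ht : 1 < |t|) :
    HasDerivAt (fun x ↦ arccos (1 / x)) (1 / (|t| * √(t ^ 2 - 1))) t := by
  have ht₀ : t ≠ 0 := abs_pos.mp (one_pos.trans ht)
  have h_abs : |1 / t| < 1 := by rwa [abs_one_div, div_lt_one (abs_pos.mpr ht₀)]
  obtain ⟨h_lower, h_upper⟩ := abs_lt.mp h_abs
  have h_inv : HasDerivAt (fun x : ℝ ↦ 1 / x) (-(1 / t ^ 2)) t := by
    simpa only [one_div] using hasDerivAt_inv ht₀
  refine ((hasDerivAt_arccos h_lower.ne' h_upper.ne).comp t h_inv).congr_deriv ?_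
  rw [one_div_pow, sqrt_one_sub_one_div_sq ht₀, ← sq_abs t]
  field_simp

theorem hasDerivAt_sqrt_one_sub_one_div_sq {t : ℝ} (ht : 1 < |t|) :
    HasDerivAt (fun x ↦ √(1 - 1 / x ^ 2)) (1 / (t ^ 3 * √(1 - 1 / t ^ 2))) t := by
  have ht₀ : t ≠ 0 := abs_pos.mp (one_pos.trans ht)
  have h_pos : 0 < 1 - 1 / t ^ 2 := by
    rw [sub_pos, div_lt_one (by positivity)]
    exact (one_lt_sq_iff_one_lt_abs t).mpr ht
  have h_inner : HasDerivAt (fun x : ℝ ↦ 1 - 1 / x ^ 2) (2 / t ^ 3) t := by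
    simp only [one_div]
    refine (((hasDerivAt_pow 2 t).fun_inv (pow_ne_zero 2 ht₀)).const_sub 1).congr_deriv ?_
    push_cast
    field_simp
  refine (h_inner.sqrt h_pos.ne').congr_deriv ?_
  field_simp

theorem arccos_lt_sqrt_one_sub_sq_div {x : ℝ} (hx₀ : 0 < x) (hx₁ : x < 1) :
    arccos x < √(1 - x ^ 2) / x := by
  rw [← tan_arccos]
  exact lt_tan (arccos_pos.mpr hx₁) (arccos_lt_pi_div_two.mpr hx₀)

theorem arccos_one_div_lt_sqrt_sq_sub_one {t : ℝ} (ht : 1 < t) :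
    arccos (1 / t) < √(t ^ 2 - 1) := by
  have ht₀ : 0 < t := one_pos.trans ht
  calc arccos (1 / t) < √(1 - (1 / t) ^ 2) / (1 / t) :=
        arccos_lt_sqrt_one_sub_sq_div (one_div_pos.mpr ht₀) ((div_lt_one ht₀).mpr ht)
    _ = √(t ^ 2 - 1) := by
        rw [one_div_pow, sqrt_one_sub_one_div_sq ht₀.ne', abs_of_pos ht₀]
        field_simp

theorem hasDerivAt_gFun {t : ℝ} (ht : 1 < t) :
    HasDerivAt gFun (1 / (t ^ 2 - 1) * (1 - arccos (1 / t) / √(t ^ 2 - 1))) t := by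
  have ht₀ : 0 < t := one_pos.trans ht
  have h_abs : |t| = t := abs_of_pos ht₀
  have h_sq : 0 < t ^ 2 - 1 := sub_pos.mpr (one_lt_pow₀ ht two_ne_zero)
  have h_sqrt : √(1 - 1 / t ^ 2) = √(t ^ 2 - 1) / t := by
    rw [sqrt_one_sub_one_div_sq ht₀.ne', h_abs]
  have h_sqrt_pos : 0 < √(t ^ 2 - 1) := sqrt_pos.mpr h_sq
  have h_quot := (hasDerivAt_arccos_one_div (h_abs.symm ▸ ht)).div
    (hasDerivAt_sqrt_one_sub_one_div_sq (h_abs.symm ▸ ht)) (h_sqrt ▸ (div_pos h_sqrt_pos ht₀).ne')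
  refine h_quot.congr_deriv ?_
  rw [h_sqrt, h_abs]
  field_simp
  rw [sq_sqrt h_sq.le]

theorem deriv_gFun_pos {t : ℝ} (ht : 1 < t) : 0 < deriv gFun t := by
  have h_sq : 0 < t ^ 2 - 1 := sub_pos.mpr (one_lt_pow₀ ht two_ne_zero)
  have h_ratio : arccos (1 / t) / √(t ^ 2 - 1) < 1 :=
    (div_lt_one (sqrt_pos.mpr h_sq)).mpr (arccos_one_div_lt_sqrt_sq_sub_one ht)
  rw [(hasDerivAt_gFun ht).deriv]
  exact mul_pos (one_div_pos.mpr h_sq) (sub_pos.mpr h_ratio)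

theorem strictMonoOn_gFun : StrictMonoOn gFun (Ioi 1) := by
  refine strictMonoOn_of_deriv_pos (convex_Ioi 1)
    (HasDerivAt.continuousOn fun t ht ↦ hasDerivAt_gFun ht) fun t ht ↦ deriv_gFun_pos ?_
  rwa [interior_Ioi] at ht

theorem stmt_3 :
    (∀ t : ℝ, 1 < t →
      HasDerivAt gFun ((1 / (t ^ 2 - 1)) * (1 - Real.arccos (1 / t) / Real.sqrt (t ^ 2 - 1))) t ∧
      0 < (1 / (t ^ 2 - 1)) * (1 - Real.arccos (1 / t) / Real.sqrt (t ^ 2 - 1))) ∧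
    StrictMonoOn gFun (Set.Ioi 1) :=
  ⟨fun _ ht ↦ ⟨hasDerivAt_gFun ht, (hasDerivAt_gFun ht).deriv ▸ deriv_gFun_pos ht⟩,
    strictMonoOn_gFun⟩
end

section
/- The function (1/(t² − 1)) · (1 − arccos(1/t)/√(t² − 1)) tends to 1/3 as t tends to 1 from the right. -/
open Real Filter

open scoped Topology

/-!
Put `x = √(t ^ 2 - 1)`. A right triangle with legs `1` and `x` has hypotenuse `t`, so
`arccos (1 / t) = arctan x` and the function is `(x - arctan x) / x ^ 3`. As `t` decreases to `1`,
`x` tends to `0`, and one application of l'Hôpital's rule gives the limit `1 / 3`.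
-/

lemma hasDerivAt_sub_arctan (x : ℝ) :
    HasDerivAt (fun y => y - arctan y) (x ^ 2 / (1 + x ^ 2)) x := by
  have hderiv : 1 - 1 / (1 + x ^ 2) = x ^ 2 / (1 + x ^ 2) := by
    have : 1 + x ^ 2 ≠ 0 := by positivity
    field_simp
    ring
  exact hderiv ▸ (hasDerivAt_id' x).sub (hasDerivAt_arctan x)

lemma tendsto_sub_arctan_div_pow_three :
    Tendsto (fun x : ℝ => (x - arctan x) / x ^ 3) (𝓝[≠] 0) (𝓝 (1 / 3)) := by
  have hne : ∀ᶠ x : ℝ in 𝓝[≠] 0, x ≠ 0 := eventually_mem_nhdsWithin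
  have hnum : Tendsto (fun x : ℝ => x - arctan x) (𝓝[≠] 0) (𝓝 0) := by
    simpa using (hasDerivAt_sub_arctan 0).continuousAt.tendsto.mono_left nhdsWithin_le_nhds
  have hden : Tendsto (fun x : ℝ => x ^ 3) (𝓝[≠] 0) (𝓝 0) := by
    simpa using ((continuous_pow 3).tendsto (0 : ℝ)).mono_left nhdsWithin_le_nhds
  have hlim : Tendsto (fun x : ℝ => 1 / (3 * (1 + x ^ 2))) (𝓝[≠] 0) (𝓝 (1 / 3)) := by
    have hcont : Continuous fun x : ℝ => 1 / (3 * (1 + x ^ 2)) :=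
      continuous_const.div (by fun_prop) fun x => by positivity
    simpa using (hcont.tendsto 0).mono_left nhdsWithin_le_nhds
  have hquot : Tendsto (fun x : ℝ => x ^ 2 / (1 + x ^ 2) / (3 * x ^ 2)) (𝓝[≠] 0) (𝓝 (1 / 3)) := by
    refine hlim.congr' ?_
    filter_upwards [hne] with x hx
    field_simp
  refine HasDerivAt.lhopital_zero_nhdsNE (.of_forall hasDerivAt_sub_arctan)
    (.of_forall fun x => by simpa using hasDerivAt_pow 3 x) ?_ hnum hden hquot
  filter_upwards [hne] with x hx
  positivity

lemma arccos_one_div_eq_arctan_sqrt {t : ℝ} (ht : 0 < t) :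
    arccos (1 / t) = arctan √(t ^ 2 - 1) := by
  have hleg : √(1 - (1 / t) ^ 2) / (1 / t) = √(t ^ 2 - 1) := by
    calc √(1 - (1 / t) ^ 2) / (1 / t) = √(t ^ 2) * √(1 - (1 / t) ^ 2) := by
          rw [sqrt_sq ht.le, div_div_eq_mul_div, div_one, mul_comm]
      _ = √(t ^ 2 * (1 - (1 / t) ^ 2)) := (sqrt_mul (sq_nonneg t) _).symm
      _ = √(t ^ 2 - 1) := by
          congr 1
          field_simp
  rw [arccos_eq_arctan (one_div_pos.2 ht), hleg]

lemma sqrt_sq_sub_one_pos {t : ℝ} (ht : 1 < t) : 0 < √(t ^ 2 - 1) :=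
  sqrt_pos.2 (sub_pos.2 (one_lt_pow₀ ht two_ne_zero))

lemma tendsto_sqrt_sq_sub_one_nhdsGT :
    Tendsto (fun t : ℝ => √(t ^ 2 - 1)) (𝓝[>] 1) (𝓝[>] 0) := by
  refine tendsto_nhdsWithin_iff.2 ⟨?_, ?_⟩
  · have hcont : Continuous fun t : ℝ => √(t ^ 2 - 1) := by fun_prop
    simpa using (hcont.tendsto 1).mono_left nhdsWithin_le_nhds
  · filter_upwards [self_mem_nhdsWithin] with t ht using sqrt_sq_sub_one_pos ht

lemma one_div_sq_sub_one_mul_eq_sub_arctan_div {t : ℝ} (ht : 1 < t) :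
    1 / (t ^ 2 - 1) * (1 - arccos (1 / t) / √(t ^ 2 - 1)) =
      (√(t ^ 2 - 1) - arctan √(t ^ 2 - 1)) / √(t ^ 2 - 1) ^ 3 := by
  have hpos := sqrt_sq_sub_one_pos ht
  have hsq : √(t ^ 2 - 1) ^ 2 = t ^ 2 - 1 := sq_sqrt (sqrt_pos.1 hpos).le
  rw [arccos_one_div_eq_arctan_sqrt (one_pos.trans ht)]
  generalize √(t ^ 2 - 1) = x at hpos hsq ⊢
  rw [← hsq]
  field_simp

theorem stmt_5 :
    Tendsto (fun t : ℝ => (1 / (t ^ 2 - 1)) * (1 - Real.arccos (1 / t) / Real.sqrt (t ^ 2 - 1)))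
      (nhdsWithin 1 (Set.Ioi 1)) (nhds (1 / 3)) := by
  have hsqrt : Tendsto (fun t : ℝ => √(t ^ 2 - 1)) (𝓝[>] 1) (𝓝[≠] 0) :=
    tendsto_sqrt_sq_sub_one_nhdsGT.mono_right (nhdsGT_le_nhdsNE 0)
  refine (tendsto_sub_arctan_div_pow_three.comp hsqrt).congr' ?_
  filter_upwards [self_mem_nhdsWithin] with t ht
  exact (one_div_sq_sub_one_mul_eq_sub_arctan_div ht).symm
end

section
/- Define h : (1, ∞) → ℝ by h(y) = √(y² − 1) − (π/2 − arcsin(1/y)). Then h is strictly positive and strictly increasing on (1, ∞), h(y) → 0 as y → 1⁺, and h(y) → ∞ as y → ∞. Consequently, y ↦ π/h(y) is a strictly decreasing bijection from (1, ∞) onto (0, ∞). -/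
open Real Filter Set

/-- The function `h(y) = √(y² − 1) − (π/2 − arcsin(1/y))`. -/
noncomputable def hFun (y : ℝ) : ℝ :=
  Real.sqrt (y ^ 2 - 1) - (Real.pi / 2 - Real.arcsin (1 / y))

/-!
Substituting `θ = arccos (1 / y)`, an increasing change of variable from `[1, ∞)` to `[0, π / 2)`,
turns `h y` into `tan θ - θ`. This function vanishes at `0` and tends to infinity at `π / 2`,
and its derivative `tan² θ` is positive in between.
-/

open scoped Topology

section ConstDiv

variable {𝕜 : Type*} [Field 𝕜] [LinearOrder 𝕜] [IsStrictOrderedRing 𝕜] {c : 𝕜}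

theorem strictAntiOn_const_div_Ioi (hc : 0 < c) : StrictAntiOn (fun x => c / x) (Ioi 0) :=
  fun _ hx _ _ hxy => div_lt_div_of_pos_left hc hx hxy

theorem bijOn_const_div_Ioi (hc : 0 < c) : BijOn (fun x => c / x) (Ioi 0) (Ioi 0) :=
  have hmaps : MapsTo (fun x => c / x) (Ioi 0) (Ioi 0) := fun _ hx => div_pos hc hx
  have hinv : LeftInvOn (fun x => c / x) (fun x => c / x) (Ioi 0) :=
    fun _ _ => div_div_cancel₀ hc.ne'
  InvOn.bijOn ⟨hinv, hinv⟩ hmaps hmaps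

end ConstDiv

theorem hasDerivAt_tan_sub_id {θ : ℝ} (hθ : cos θ ≠ 0) :
    HasDerivAt (fun x => tan x - x) (tan θ ^ 2) θ := by
  refine ((hasDerivAt_tan hθ).sub (hasDerivAt_id θ)).congr_deriv ?_
  rw [one_div, ← inv_one_add_tan_sq hθ, inv_inv, add_sub_cancel_left]

theorem strictMonoOn_tan_sub_id : StrictMonoOn (fun θ => tan θ - θ) (Ico 0 (π / 2)) := by
  have hcos : ∀ θ ∈ Ico 0 (π / 2), cos θ ≠ 0 := fun θ hθ =>
    (cos_pos_of_mem_Ioo ⟨by linarith [hθ.1, pi_pos], hθ.2⟩).ne'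
  refine strictMonoOn_of_deriv_pos (convex_Ico 0 (π / 2))
    (fun θ hθ => (hasDerivAt_tan_sub_id (hcos θ hθ)).continuousAt.continuousWithinAt)
    fun θ hθ => ?_
  rw [interior_Ico] at hθ
  rw [(hasDerivAt_tan_sub_id (hcos θ (Ioo_subset_Ico_self hθ))).deriv]
  exact pow_pos (tan_pos_of_pos_of_lt_pi_div_two hθ.1 hθ.2) 2

theorem tendsto_tan_sub_id_pi_div_two :
    Tendsto (fun θ => tan θ - θ) (𝓝[<] (π / 2)) atTop :=
  tendsto_tan_pi_div_two.atTop_add (continuous_neg.continuousWithinAt (x := π / 2))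

theorem arccos_inv_mem_Ico {y : ℝ} (hy : 0 < y) : arccos y⁻¹ ∈ Ico 0 (π / 2) :=
  ⟨arccos_nonneg _, arccos_lt_pi_div_two.2 (inv_pos.2 hy)⟩

theorem strictMonoOn_arccos_inv : StrictMonoOn (fun y : ℝ => arccos y⁻¹) (Ici 1) := by
  have hanti : StrictAntiOn (fun y : ℝ => y⁻¹) (Ici 1) := fun x hx _ _ hxy =>
    inv_strictAnti₀ (one_pos.trans_le hx) hxy
  have hmaps : MapsTo (fun y : ℝ => y⁻¹) (Ici 1) (Icc (-1) 1) := fun y (hy : 1 ≤ y) =>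
    ⟨by linarith [inv_nonneg.2 (zero_le_one.trans hy)], inv_le_one_of_one_le₀ hy⟩
  exact strictAntiOn_arccos.comp hanti hmaps

theorem tendsto_arccos_inv_atTop :
    Tendsto (fun y : ℝ => arccos y⁻¹) atTop (𝓝[<] (π / 2)) := by
  refine tendsto_nhdsWithin_iff.2 ⟨?_, ?_⟩
  · exact arccos_zero ▸ (continuous_arccos.tendsto 0).comp tendsto_inv_atTop_zero
  · filter_upwards [eventually_gt_atTop 0] with y hy using (arccos_inv_mem_Ico hy).2

theorem tan_arccos_inv {y : ℝ} (hy : 0 < y) : tan (arccos y⁻¹) = √(y ^ 2 - 1) := by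
  calc
    tan (arccos y⁻¹) = √(1 - y⁻¹ ^ 2) * √(y ^ 2) := by
      rw [tan_arccos, div_inv_eq_mul, sqrt_sq hy.le]
    _ = √((1 - y⁻¹ ^ 2) * y ^ 2) := (sqrt_mul' _ (sq_nonneg y)).symm
    _ = √(y ^ 2 - 1) := by congr 1; field_simp

theorem hFun_eq_tan_sub_id {y : ℝ} (hy : 0 < y) :
    hFun y = tan (arccos y⁻¹) - arccos y⁻¹ := by
  rw [tan_arccos_inv hy, hFun, one_div, ← arccos_eq_pi_div_two_sub_arcsin]

theorem hFun_one : hFun 1 = 0 := by simp [hFun]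

theorem continuousAt_hFun {y : ℝ} (hy : y ≠ 0) : ContinuousAt hFun y := by
  unfold hFun
  fun_prop (disch := assumption)

theorem strictMonoOn_hFun : StrictMonoOn hFun (Ici 1) :=
  have hpos : ∀ y ∈ Ici (1 : ℝ), 0 < y := fun _ hy => one_pos.trans_le hy
  (strictMonoOn_tan_sub_id.comp strictMonoOn_arccos_inv
    fun y hy => arccos_inv_mem_Ico (hpos y hy)).congr
    fun y hy => (hFun_eq_tan_sub_id (hpos y hy)).symm

theorem tendsto_hFun_nhdsGT_one : Tendsto hFun (𝓝[>] 1) (𝓝 0) :=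
  hFun_one ▸ (continuousAt_hFun one_ne_zero).continuousWithinAt

theorem tendsto_hFun_atTop : Tendsto hFun atTop atTop := by
  refine (tendsto_tan_sub_id_pi_div_two.comp tendsto_arccos_inv_atTop).congr' ?_
  filter_upwards [eventually_gt_atTop 0] with y hy using (hFun_eq_tan_sub_id hy).symm

theorem bijOn_hFun : BijOn hFun (Ioi 1) (Ioi 0) := by
  have hcont : ContinuousOn hFun (Ici 1) := fun y hy =>
    (continuousAt_hFun (one_pos.trans_le hy).ne').continuousWithinAt
  have himage : hFun '' Ioi 1 = Ioi 0 := by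
    rw [hcont.image_Ioi_of_strictMonoOn strictMonoOn_hFun tendsto_hFun_atTop, hFun_one]
  exact himage ▸ (strictMonoOn_hFun.injOn.mono Ioi_subset_Ici_self).bijOn_image

theorem stmt_6 :
    (∀ y : ℝ, 1 < y → 0 < hFun y) ∧
    StrictMonoOn hFun (Set.Ioi 1) ∧
    Tendsto hFun (nhdsWithin 1 (Set.Ioi 1)) (nhds 0) ∧
    Tendsto hFun atTop atTop ∧
    StrictAntiOn (fun y => Real.pi / hFun y) (Set.Ioi 1) ∧
    Set.BijOn (fun y => Real.pi / hFun y) (Set.Ioi 1) (Set.Ioi 0) := by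
  have hmono : StrictMonoOn hFun (Ioi 1) := strictMonoOn_hFun.mono Ioi_subset_Ici_self
  exact ⟨fun _ hy => bijOn_hFun.mapsTo hy, hmono, tendsto_hFun_nhdsGT_one, tendsto_hFun_atTop,
    (strictAntiOn_const_div_Ioi pi_pos).comp_strictMonoOn hmono bijOn_hFun.mapsTo,
    (bijOn_const_div_Ioi pi_pos).comp bijOn_hFun⟩
end

section
/- Let y > 1 be real, set φ = arcsin(1/y) and x = π / (√(y² − 1) − (π/2 − arcsin(1/y))). Then φ ∈ (0, π/2), cos φ − (π/2 − φ)·sin φ > 0, sin φ / (cos φ − (π/2 − φ)·sin φ) = x/π, and 1/sin φ = y. -/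
open Real

lemma mul_cos_lt_sin {θ : ℝ} (hθ_pos : 0 < θ) (hθ_le : θ ≤ π) : θ * cos θ < sin θ := by
  rcases lt_or_ge θ (π / 2) with hθ | hθ
  · have hcos : 0 < cos θ := cos_pos_of_mem_Ioo ⟨by linarith, hθ⟩
    have htan : θ < sin θ / cos θ := tan_eq_sin_div_cos θ ▸ lt_tan hθ_pos hθ
    exact (lt_div_iff₀ hcos).mp htan
  · rcases hθ_le.lt_or_eq with hθ_lt | rfl
    · calc
        θ * cos θ ≤ 0 := mul_nonpos_of_nonneg_of_nonpos hθ_pos.le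
          (cos_nonpos_of_pi_div_two_le_of_le hθ (by linarith))
        _ < sin θ := sin_pos_of_pos_of_lt_pi hθ_pos hθ_lt
    · simp [pi_pos]

lemma pi_div_two_sub_mul_sin_lt_cos {φ : ℝ} (hφ_ge : -(π / 2) ≤ φ) (hφ_lt : φ < π / 2) :
    (π / 2 - φ) * sin φ < cos φ := by
  simpa only [cos_pi_div_two_sub, sin_pi_div_two_sub] using
    mul_cos_lt_sin (sub_pos.mpr hφ_lt) (show π / 2 - φ ≤ π by linarith)

lemma arcsin_one_div_mem_Ioo {y : ℝ} (hy : 1 < y) : arcsin (1 / y) ∈ Set.Ioo 0 (π / 2) := by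
  have hy_pos : 0 < y := one_pos.trans hy
  exact ⟨arcsin_pos.mpr (one_div_pos.mpr hy_pos),
    arcsin_lt_pi_div_two.mpr ((div_lt_one hy_pos).mpr hy)⟩

lemma sin_arcsin_one_div {y : ℝ} (hy : 1 ≤ |y|) : sin (arcsin (1 / y)) = 1 / y := by
  have habs : |1 / y| ≤ 1 := by
    rw [one_div, abs_inv]
    exact inv_le_one_of_one_le₀ hy
  exact sin_arcsin (abs_le.mp habs).1 (abs_le.mp habs).2

lemma cos_arcsin_one_div {y : ℝ} (hy : 0 < y) : cos (arcsin (1 / y)) = √(y ^ 2 - 1) / y := by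
  have hfrac : 1 - (1 / y) ^ 2 = (y ^ 2 - 1) / y ^ 2 := by field_simp
  rw [cos_arcsin, hfrac, sqrt_div' _ (sq_nonneg y), sqrt_sq hy.le]

lemma cos_sub_mul_sin_arcsin_one_div {y : ℝ} (hy : 1 ≤ y) (c : ℝ) :
    cos (arcsin (1 / y)) - c * sin (arcsin (1 / y)) = (√(y ^ 2 - 1) - c) / y := by
  rw [cos_arcsin_one_div (by linarith), sin_arcsin_one_div (hy.trans (le_abs_self y))]
  ring

theorem stmt_7 (y : ℝ) (hy : 1 < y)
    (φ : ℝ) (hφ : φ = Real.arcsin (1 / y))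
    (x : ℝ) (hx : x = Real.pi / (Real.sqrt (y ^ 2 - 1) - (Real.pi / 2 - Real.arcsin (1 / y)))) :
    φ ∈ Set.Ioo 0 (Real.pi / 2) ∧
    0 < Real.cos φ - (Real.pi / 2 - φ) * Real.sin φ ∧
    Real.sin φ / (Real.cos φ - (Real.pi / 2 - φ) * Real.sin φ) = x / Real.pi ∧
    1 / Real.sin φ = y := by
  subst hφ hx
  have hφ_mem := arcsin_one_div_mem_Ioo hy
  have hsin : sin (arcsin (1 / y)) = 1 / y := sin_arcsin_one_div (hy.le.trans (le_abs_self y))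
  refine ⟨hφ_mem, ?pos, ?equation, by rw [hsin, one_div_one_div]⟩
  case pos =>
    exact sub_pos.mpr (pi_div_two_sub_mul_sin_lt_cos (neg_pi_div_two_le_arcsin _) hφ_mem.2)
  case equation =>
    have hy_ne : y ≠ 0 := (one_pos.trans hy).ne'
    rw [cos_sub_mul_sin_arcsin_one_div hy.le, hsin, div_div_div_cancel_right₀ hy_ne,
      div_div_cancel_left' pi_ne_zero, one_div]
end

section
/- Let α > 1 and suppose that the set K = { (ℓ, j) : ℓ a nonnegative integer, j a positive zero of J_ℓ with j = αℓ } is finite and that there exists c > 0 such that |j − αℓ| ≥ c for every nonnegative integer ℓ and every positive zero j of J_ℓ with j ≠ αℓ. Then for every m ∈ ℝ: the set { (ℓ, j) : ℓ a nonnegative integer, j a positive zero of J_ℓ, j² − α²ℓ² + m = 0 } is finite, and there exists c_m > 0 such that |j² − α²ℓ² + m| ≥ c_m · j for every nonnegative integer ℓ and every positive zero j of J_ℓ with j² − α²ℓ² + m ≠ 0. In particular, the set { j² − α²ℓ² + m : ℓ a nonnegative integer, j a positive zero of J_ℓ } has no finite accumulation point in ℝ. -/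
open Real Set Filter

/-!
Since `j² - ω² = (j - ω)(j + ω)` with `ω = αℓ ≥ 0`, a gap `c ≤ |j - ω|` gives `c * j ≤ |j² - ω²|`,
and the bounded perturbation `m` costs only half of this once `j` is large. All but finitely many
pairs `(ℓ, j)` are large: dividing `J_ν` by `(x / 2) ^ ν` leaves an entire function whose power
series is so close to its constant term that it has no zero with `(x / 2)² < (ν + 1) log 2`, so only
finitely many orders have a zero below a given bound, and each of them has finitely many by
analyticity. Hence `j² - ω² + m` tends to infinity along the cofinite filter of pairs, and the
finitely many exceptional pairs only affect the constants.
-/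

section BesselClifford

variable {ν : ℝ}

/-- The Taylor coefficients at the origin of the Bessel–Clifford function `besselClifford ν`. -/
noncomputable def besselCliffordCoeff (ν : ℝ) (n : ℕ) : ℝ :=
  (n.factorial * Real.Gamma (n + ν + 1))⁻¹

/-- The Bessel–Clifford function of order `ν`, the entire function left over when the branch
factor `(x / 2) ^ ν` is removed from `besselJ ν x` (see `besselJ_eq_rpow_mul_besselClifford`). -/
noncomputable def besselClifford (ν z : ℝ) : ℝ :=
  ∑' n : ℕ, besselCliffordCoeff ν n * z ^ n

lemma besselJ_eq_rpow_mul_besselClifford (ν : ℝ) {x : ℝ} (hx : 0 < x) :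
    besselJ ν x = (x / 2) ^ ν * besselClifford ν (-(x / 2) ^ 2) := by
  rw [besselJ, besselClifford, ← tsum_mul_left]
  refine tsum_congr fun n ↦ ?_
  have hpow : (x / 2) ^ (2 * (n : ℝ) + ν) = ((x / 2) ^ 2) ^ n * (x / 2) ^ ν := by
    rw [rpow_add (half_pos hx), ← pow_mul, ← rpow_natCast]
    push_cast
    rfl
  rw [hpow, besselCliffordCoeff, neg_pow ((x / 2) ^ 2), div_eq_mul_inv]
  ring

lemma IsPosBesselZero.besselClifford_eq_zero {j : ℝ} (hj : IsPosBesselZero ν j) :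
    besselClifford ν (-(j / 2) ^ 2) = 0 := by
  obtain ⟨hj_pos, hj_zero⟩ := hj
  rw [besselJ_eq_rpow_mul_besselClifford ν hj_pos] at hj_zero
  exact (mul_eq_zero.1 hj_zero).resolve_left (rpow_pos_of_pos (half_pos hj_pos) ν).ne'

lemma pow_mul_Gamma_le_Gamma_natCast_add {s : ℝ} (hs : 0 < s) (n : ℕ) :
    s ^ n * Real.Gamma s ≤ Real.Gamma (n + s) := by
  induction n with
  | zero => simp
  | succ n ih =>
    have hns : 0 < (n : ℝ) + s := by positivity
    calc s ^ (n + 1) * Real.Gamma s = s * (s ^ n * Real.Gamma s) := by ring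
      _ ≤ (n + s) * Real.Gamma (n + s) := by
        gcongr
        exact le_add_of_nonneg_left n.cast_nonneg
      _ = Real.Gamma ((n + 1 : ℕ) + s) := by
        rw [← Real.Gamma_add_one hns.ne', Nat.cast_succ, add_right_comm]

lemma besselCliffordCoeff_zero (ν : ℝ) :
    besselCliffordCoeff ν 0 = (Real.Gamma (ν + 1))⁻¹ := by
  simp [besselCliffordCoeff]

lemma norm_besselCliffordCoeff_mul_pow_le (hν : -1 < ν) (z : ℝ) (n : ℕ) :
    ‖besselCliffordCoeff ν n * z ^ n‖ ≤
      (Real.Gamma (ν + 1))⁻¹ * ((|z| / (ν + 1)) ^ n / n.factorial) := by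
  have hs : 0 < ν + 1 := by linarith
  have hΓn : (ν + 1) ^ n * Real.Gamma (ν + 1) ≤ Real.Gamma (n + ν + 1) := by
    rw [add_assoc]
    exact pow_mul_Gamma_le_Gamma_natCast_add hs n
  have hΓn_pos : 0 < Real.Gamma (n + ν + 1) :=
    (mul_pos (pow_pos hs n) (Gamma_pos_of_pos hs)).trans_le hΓn
  calc ‖besselCliffordCoeff ν n * z ^ n‖
      = (n.factorial * Real.Gamma (n + ν + 1))⁻¹ * |z| ^ n := by
        rw [norm_mul, norm_pow, besselCliffordCoeff, norm_eq_abs, norm_eq_abs,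
          abs_of_pos (by positivity)]
    _ ≤ (n.factorial * ((ν + 1) ^ n * Real.Gamma (ν + 1)))⁻¹ * |z| ^ n := by gcongr
    _ = (Real.Gamma (ν + 1))⁻¹ * ((|z| / (ν + 1)) ^ n / n.factorial) := by
        rw [div_pow]
        field_simp

lemma hasSum_mul_pow_div_factorial (c t : ℝ) :
    HasSum (fun n : ℕ ↦ c * (t ^ n / n.factorial)) (c * exp t) := by
  rw [exp_eq_exp_ℝ]
  exact (NormedSpace.expSeries_div_hasSum_exp t).mul_left c

lemma hasSum_besselClifford (hν : -1 < ν) (z : ℝ) :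
    HasSum (fun n : ℕ ↦ besselCliffordCoeff ν n * z ^ n) (besselClifford ν z) :=
  (Summable.of_norm_bounded (hasSum_mul_pow_div_factorial _ _).summable
    (norm_besselCliffordCoeff_mul_pow_le hν z)).hasSum

lemma abs_besselClifford_sub_le (hν : -1 < ν) (z : ℝ) :
    |besselClifford ν z - (Real.Gamma (ν + 1))⁻¹| ≤
      (Real.Gamma (ν + 1))⁻¹ * (exp (|z| / (ν + 1)) - 1) := by
  have htail := (hasSum_nat_add_iff' 1).2 (hasSum_besselClifford hν z)
  have hbound := (hasSum_nat_add_iff' 1).2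
    (hasSum_mul_pow_div_factorial (Real.Gamma (ν + 1))⁻¹ (|z| / (ν + 1)))
  have hle := htail.norm_le_of_bounded hbound
    fun n ↦ norm_besselCliffordCoeff_mul_pow_le hν z (n + 1)
  simpa [besselCliffordCoeff_zero, mul_sub] using hle

lemma besselClifford_ne_zero (hν : -1 < ν) {z : ℝ} (hz : |z| < (ν + 1) * log 2) :
    besselClifford ν z ≠ 0 := by
  intro hzero
  have hs : 0 < ν + 1 := by linarith
  have hΓ : 0 < (Real.Gamma (ν + 1))⁻¹ := inv_pos.2 (Gamma_pos_of_pos hs)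
  have hexp : exp (|z| / (ν + 1)) < 2 :=
    (lt_log_iff_exp_lt two_pos).1 ((div_lt_iff₀' hs).2 hz)
  have hle := abs_besselClifford_sub_le hν z
  rw [hzero, zero_sub, abs_neg, abs_of_pos hΓ] at hle
  exact hle.not_gt (mul_lt_of_lt_one_right hΓ (by linarith))

lemma analyticOnNhd_besselClifford (hν : -1 < ν) : AnalyticOnNhd ℝ (besselClifford ν) univ := by
  set p := FormalMultilinearSeries.ofScalars ℝ (besselCliffordCoeff ν) with hp
  have hradius : p.radius = ⊤ := by
    refine p.radius_eq_top_of_summable_norm fun r ↦ ?_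
    simpa [hp] using (hasSum_besselClifford hν r).summable.norm
  have hsum : p.sum = besselClifford ν := by
    ext z
    simp [hp, FormalMultilinearSeries.sum, besselClifford, mul_comm]
  have hanalytic := (p.hasFPowerSeriesOnBall (by simp [hradius])).analyticOnNhd
  rwa [hradius, hsum, Metric.eball_top] at hanalytic

end BesselClifford

section BesselZeros

variable {ν : ℝ}

lemma IsPosBesselZero.mul_log_two_le_sq (hν : -1 < ν) {j : ℝ} (hj : IsPosBesselZero ν j) :
    (ν + 1) * log 2 ≤ (j / 2) ^ 2 := by
  by_contra! hlt
  refine besselClifford_ne_zero hν ?_ hj.besselClifford_eq_zero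
  rwa [abs_neg, abs_of_nonneg (sq_nonneg _)]

lemma finite_isPosBesselZero_le (hν : -1 < ν) (R : ℝ) :
    {j : ℝ | IsPosBesselZero ν j ∧ j ≤ R}.Finite := by
  set g : ℝ → ℝ := fun x ↦ besselClifford ν (-(x / 2) ^ 2)
  have hg : AnalyticOnNhd ℝ g univ :=
    (analyticOnNhd_besselClifford hν).comp (fun x _ ↦ by fun_prop) (mapsTo_univ _ _)
  have hg_zero : g 0 ≠ 0 := besselClifford_ne_zero hν <| by
    simpa using mul_pos (neg_lt_iff_pos_add.1 hν) (log_pos one_lt_two)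
  have hcodiscrete : g ⁻¹' {0}ᶜ ∈ codiscreteWithin (Icc 0 R) :=
    codiscreteWithin_mono (subset_univ _) (hg.preimage_zero_mem_codiscrete hg_zero)
  refine (isCompact_Icc.finite_sdiff_of_mem_codiscreteWithin hcodiscrete).subset ?_
  rintro j ⟨hj, hjR⟩
  exact ⟨⟨hj.1.le, hjR⟩, fun hj_ne ↦ hj_ne hj.besselClifford_eq_zero⟩

lemma finite_isPosBesselZero_prod_le {ι : Type*} {ν : ι → ℝ} (hν : ∀ i, -1 < ν i)
    (hν_top : Tendsto ν cofinite atTop) (R : ℝ) :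
    {p : ι × ℝ | IsPosBesselZero (ν p.1) p.2 ∧ p.2 ≤ R}.Finite := by
  have horders : {i | (ν i + 1) * log 2 ≤ (R / 2) ^ 2}.Finite := by
    have htop := (tendsto_atTop_add_const_right _ 1 hν_top).atTop_mul_const (log_pos one_lt_two)
    simpa using eventually_cofinite.1 (htop.eventually_gt_atTop ((R / 2) ^ 2))
  refine (horders.biUnion fun i _ ↦
    (finite_isPosBesselZero_le (hν i) R).image (Prod.mk i)).subset ?_
  rintro ⟨i, j⟩ ⟨hj, hjR⟩
  have hsq : (j / 2) ^ 2 ≤ (R / 2) ^ 2 := by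
    have := hj.1.le
    gcongr
  exact mem_biUnion ((hj.mul_log_two_le_sq (hν i)).trans hsq) ⟨j, ⟨hj, hjR⟩, rfl⟩

lemma tendsto_isPosBesselZero_cofinite_atTop {ι : Type*} {ν : ι → ℝ} (hν : ∀ i, -1 < ν i)
    (hν_top : Tendsto ν cofinite atTop) :
    Tendsto (fun p : {p : ι × ℝ // IsPosBesselZero (ν p.1) p.2} ↦ p.1.2) cofinite atTop := by
  refine tendsto_atTop.2 fun R ↦ eventually_cofinite.2 ?_
  refine ((finite_isPosBesselZero_prod_le hν hν_top R).preimage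
    Subtype.val_injective.injOn).subset fun p hp ↦ ?_
  exact ⟨p.2, (not_le.1 hp).le⟩

end BesselZeros

section Growth

variable {ι : Type*} {a f : ι → ℝ} {c : ℝ}

lemma eventually_half_mul_le_abs_sq_sub_sq_add {l : Filter ι} {b : ι → ℝ} (hc : 0 < c)
    (ha : Tendsto a l atTop) (hb : ∀ᶠ i in l, 0 ≤ b i) (hgap : ∀ᶠ i in l, c ≤ |a i - b i|)
    (m : ℝ) : ∀ᶠ i in l, c / 2 * a i ≤ |a i ^ 2 - b i ^ 2 + m| := by
  filter_upwards [ha.eventually_ge_atTop 0, hb, hgap,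
    (ha.const_mul_atTop (half_pos hc)).eventually_ge_atTop |m|] with i hai hbi hgapi hmi
  have hfactor : c * a i ≤ |a i ^ 2 - b i ^ 2| := calc
    c * a i ≤ |a i - b i| * (a i + b i) := by
      gcongr
      exact le_add_of_nonneg_right hbi
    _ = |a i ^ 2 - b i ^ 2| := by
      rw [sq_sub_sq, abs_mul, abs_of_nonneg (add_nonneg hai hbi), mul_comm]
  have htriangle : |a i ^ 2 - b i ^ 2| - |m| ≤ |a i ^ 2 - b i ^ 2 + m| := by
    simpa using abs_sub_abs_le_abs_sub (a i ^ 2 - b i ^ 2) (-m)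
  linarith

lemma exists_pos_forall_mul_le_abs_of_eventually_cofinite (hc : 0 < c) (ha : ∀ i, 0 ≤ a i)
    (h : ∀ᶠ i in cofinite, c * a i ≤ |f i|) :
    ∃ δ : ℝ, 0 < δ ∧ ∀ i, f i ≠ 0 → δ * a i ≤ |f i| := by
  have hsmall (i : ι) : ∀ᶠ δ in nhds (0 : ℝ), f i ≠ 0 → δ * a i ≤ |f i| := by
    rcases eq_or_ne (f i) 0 with hfi | hfi
    · simp [hfi]
    · have hlim : Tendsto (· * a i) (nhds (0 : ℝ)) (nhds 0) := by
        simpa using (tendsto_id (x := nhds (0 : ℝ))).mul_const (a i)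
      filter_upwards [hlim.eventually_le_const (abs_pos.2 hfi)] with δ hδ _ using hδ
  have hexceptional : ∀ᶠ δ in nhds (0 : ℝ),
      ∀ i ∈ {i | ¬c * a i ≤ |f i|}, f i ≠ 0 → δ * a i ≤ |f i| :=
    (eventually_all_finite (eventually_cofinite.1 h)).2 fun i _ ↦ hsmall i
  obtain ⟨δ, ⟨hδ, hδc⟩, hδ_pos⟩ := (((hexceptional.and (eventually_le_nhds hc)).filter_mono
    nhdsWithin_le_nhds).and (self_mem_nhdsWithin (s := Ioi 0))).exists
  refine ⟨δ, hδ_pos, fun i hfi ↦ ?_⟩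
  by_cases hi : c * a i ≤ |f i|
  · exact (mul_le_mul_of_nonneg_right hδc (ha i)).trans hi
  · exact hδ i hi hfi

lemma tendsto_cocompact_of_eventually_mul_le_abs {l : Filter ι} (hc : 0 < c)
    (ha : Tendsto a l atTop) (h : ∀ᶠ i in l, c * a i ≤ |f i|) :
    Tendsto f l (cocompact ℝ) := by
  rw [← Metric.cobounded_eq_cocompact, ← tendsto_norm_atTop_iff_cobounded]
  exact tendsto_atTop_mono' l h (ha.const_mul_atTop hc)

lemma not_accPt_range_of_tendsto_cofinite_cocompact {X : Type*} [TopologicalSpace X] [T1Space X]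
    [WeaklyLocallyCompactSpace X] {f : ι → X} (hf : Tendsto f cofinite (cocompact X)) (x : X) :
    ¬AccPt x (𝓟 (range f)) := by
  intro hx
  obtain ⟨K, hK, hKx⟩ := exists_compact_mem_nhds x
  refine Infinite.of_accPt (hx.nhds_inter hKx) ?_
  rw [← image_preimage_eq_inter_range]
  exact (tendsto_cofinite_cocompact_iff.1 hf K hK).image f

end Growth

theorem stmt_13_general {ι : Type*} (ν ω : ι → ℝ) (hν : ∀ i, -1 < ν i)
    (hν_top : Tendsto ν cofinite atTop) (hω : ∀ i, 0 ≤ ω i)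
    (hK : {p : ι × ℝ | IsPosBesselZero (ν p.1) p.2 ∧ p.2 = ω p.1}.Finite)
    (hc : ∃ c : ℝ, 0 < c ∧ ∀ (i : ι) (j : ℝ), IsPosBesselZero (ν i) j → j ≠ ω i →
      c ≤ |j - ω i|) (m : ℝ) :
    {p : ι × ℝ | IsPosBesselZero (ν p.1) p.2 ∧ p.2 ^ 2 - ω p.1 ^ 2 + m = 0}.Finite ∧
      (∃ cm : ℝ, 0 < cm ∧ ∀ (i : ι) (j : ℝ), IsPosBesselZero (ν i) j →
        j ^ 2 - ω i ^ 2 + m ≠ 0 → cm * j ≤ |j ^ 2 - ω i ^ 2 + m|) ∧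
      ∀ Λ : ℝ, ¬AccPt Λ (𝓟 {x : ℝ | ∃ (i : ι) (j : ℝ), IsPosBesselZero (ν i) j ∧
        x = j ^ 2 - ω i ^ 2 + m}) := by
  obtain ⟨c, hc_pos, hc⟩ := hc
  let Z := {p : ι × ℝ // IsPosBesselZero (ν p.1) p.2}
  let eigenvalue : Z → ℝ := fun p ↦ p.1.2 ^ 2 - ω p.1.1 ^ 2 + m
  have hj_top : Tendsto (fun p : Z ↦ p.1.2) cofinite atTop :=
    tendsto_isPosBesselZero_cofinite_atTop hν hν_top
  have hgap : ∀ᶠ p : Z in cofinite, c ≤ |p.1.2 - ω p.1.1| :=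
    eventually_cofinite.2 <| (hK.preimage Subtype.val_injective.injOn).subset
      fun p hp ↦ ⟨p.2, not_imp_comm.1 (hc _ _ p.2) hp⟩
  have hgrowth : ∀ᶠ p in cofinite, c / 2 * p.1.2 ≤ |eigenvalue p| :=
    eventually_half_mul_le_abs_sq_sub_sq_add hc_pos hj_top (.of_forall fun p ↦ hω p.1.1) hgap m
  have hproper : Tendsto eigenvalue cofinite (cocompact ℝ) :=
    tendsto_cocompact_of_eventually_mul_le_abs (half_pos hc_pos) hj_top hgrowth
  obtain ⟨cm, hcm_pos, hcm⟩ := exists_pos_forall_mul_le_abs_of_eventually_cofinite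
    (half_pos hc_pos) (fun p : Z ↦ p.2.1.le) hgrowth
  refine ⟨?_, ⟨cm, hcm_pos, fun i j hj ↦ hcm ⟨(i, j), hj⟩⟩, fun Λ hΛ ↦ ?_⟩
  · refine ((tendsto_cofinite_cocompact_iff.1 hproper {0} isCompact_singleton).image
      Subtype.val).subset fun p hp ↦ ⟨⟨p, hp.1⟩, hp.2, rfl⟩
  · refine not_accPt_range_of_tendsto_cofinite_cocompact hproper Λ (hΛ.mono (principal_mono.2 ?_))
    rintro _ ⟨i, j, hj, rfl⟩
    exact ⟨⟨(i, j), hj⟩, rfl⟩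

theorem stmt_13 (α : ℝ) (hα : 1 < α)
    (hK : {p : ℕ × ℝ | IsPosBesselZero p.1 p.2 ∧ p.2 = α * p.1}.Finite)
    (hc : ∃ c : ℝ, 0 < c ∧ ∀ (ℓ : ℕ) (j : ℝ), IsPosBesselZero ℓ j → j ≠ α * ℓ →
      c ≤ |j - α * ℓ|) :
    ∀ m : ℝ,
      {p : ℕ × ℝ | IsPosBesselZero p.1 p.2 ∧
        p.2 ^ 2 - α ^ 2 * (p.1 : ℝ) ^ 2 + m = 0}.Finite ∧
      (∃ cm : ℝ, 0 < cm ∧ ∀ (ℓ : ℕ) (j : ℝ), IsPosBesselZero ℓ j →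
        j ^ 2 - α ^ 2 * (ℓ : ℝ) ^ 2 + m ≠ 0 →
        cm * j ≤ |j ^ 2 - α ^ 2 * (ℓ : ℝ) ^ 2 + m|) ∧
      (∀ Λ : ℝ, ¬ AccPt Λ (Filter.principal
        {x : ℝ | ∃ (ℓ : ℕ) (j : ℝ), IsPosBesselZero ℓ j ∧
          x = j ^ 2 - α ^ 2 * (ℓ : ℝ) ^ 2 + m})) := by
  simpa only [mul_pow] using stmt_13_general (fun ℓ : ℕ ↦ (ℓ : ℝ)) (fun ℓ ↦ α * ℓ)
    (fun ℓ ↦ neg_one_lt_zero.trans_le ℓ.cast_nonneg)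
    (Nat.cofinite_eq_atTop ▸ tendsto_natCast_atTop_atTop)
    (fun ℓ ↦ mul_nonneg (zero_le_one.trans hα.le) ℓ.cast_nonneg) hK hc
end
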